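/- arXiv:1605.09701 — 3 statements merged into one kernel-verified Lean document; each statement's English description precedes it below -/
import Mathlib

section
/- Let P be the R-measure and c = (1/2, √3/6). The set {S₁(c), S₂(c), S₃(c)} = {(1/6, √3/18), (5/6, √3/18), (1/2, 7√3/18)} is the unique optimal set of three-means for P, and the quantization error is V₃(P) = 1/54. -/
open MeasureTheory ENNReal

noncomputable section

abbrev E2 : Type := EuclideanSpace ℝ (Fin 2)

/-- The point (a, b) of the Euclidean plane. -/
def pt (a b : ℝ) : E2 := (WithLp.equiv 2 (Fin 2 → ℝ)).symm ![a, b]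

/-- S₁(x) = x/3. -/
def S1 : E2 → E2 := fun x => (3 : ℝ)⁻¹ • x

/-- S₂(x) = x/3 + (2/3, 0). -/
def S2 : E2 → E2 := fun x => (3 : ℝ)⁻¹ • x + pt (2/3) 0

/-- S₃(x) = x/3 + (1/3, √3/3). -/
def S3 : E2 → E2 := fun x => (3 : ℝ)⁻¹ • x + pt (1/3) (Real.sqrt 3 / 3)

def Smap : Fin 3 → E2 → E2 := ![S1, S2, S3]

/-- For a word ω = ω₁⋯ω_k ∈ {1,2,3}^k, the composition S_ω = S_{ω₁} ∘ ⋯ ∘ S_{ω_k}. -/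
def Sword {k : ℕ} (ω : Fin k → Fin 3) : E2 → E2 :=
  fun x => (List.ofFn fun i => Smap (ω i)).foldr (fun g y => g y) x

/-- The closed triangle with vertices (0,0), (1,0), (1/2, √3/2). -/
def Tri : Set E2 := convexHull ℝ {pt 0 0, pt 1 0, pt (1/2) (Real.sqrt 3 / 2)}

/-- The distortion error ∫ min_{a ∈ α} ‖x − a‖² dμ of a set α of points. -/
def err (μ : Measure E2) (α : Set E2) : ℝ≥0∞ :=
  ∫⁻ x, ⨅ a ∈ α, ENNReal.ofReal (‖x - a‖ ^ 2) ∂μ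

/-- The n-th quantization error V_n(μ). -/
def quantErr (μ : Measure E2) (n : ℕ) : ℝ≥0∞ :=
  ⨅ (α : Set E2) (_ : α.Finite ∧ α.ncard ≤ n), err μ α

/-- α is an optimal set of n-means for μ. -/
def IsOptimal (μ : Measure E2) (n : ℕ) (α : Set E2) : Prop :=
  α.Finite ∧ α.ncard ≤ n ∧ err μ α = quantErr μ n


open Filter Topology

/-! ### Real-algebra core -/

lemma amgm_lt {A B C : ℝ} (hB : 0 ≤ B) (hC : 0 ≤ C) (h : A ^ 2 < 4 * B * C) : A < B + C := by
  by_contra hc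
  push Not at hc
  nlinarith [sq_nonneg (B - C)]

lemma core_ordered (t1 t2 t3 N h1 h2 h3 : ℝ) (h12 : t2 ≤ t1) (h23 : t3 ≤ t2)
    (hsum : t1 + t2 + t3 = 0) (hN : N = 9 / 2 * (t1 ^ 2 + t2 ^ 2 + t3 ^ 2))
    (hp : ∀ t h, (t = t1 ∧ h = h1) ∨ (t = t2 ∧ h = h2) ∨ (t = t3 ∧ h = h3) →
      (0 ≤ 2 * t - N + t3 → h ≤ 2 * t - N) ∧ (2 * t - N + t1 ≤ 0 → h ≤ 0) ∧
      (2 * t - N + t3 ≤ 0 → 0 ≤ 2 * t - N + t1 →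
        h * (t1 - t3) ≤ (2 * t - N + t1) * (-t3))) :
    h1 + h2 + h3 ≤ 4 / 27 ∧
      (h1 + h2 + h3 = 4 / 27 → t1 = 4 / 27 ∧ t2 = -2 / 27 ∧ t3 = -2 / 27) := by
  obtain ⟨a1, b1, c1⟩ := hp t1 h1 (Or.inl ⟨rfl, rfl⟩)
  obtain ⟨a2, b2, c2⟩ := hp t2 h2 (Or.inr (Or.inl ⟨rfl, rfl⟩))
  obtain ⟨a3, b3, c3⟩ := hp t3 h3 (Or.inr (Or.inr ⟨rfl, rfl⟩))
  clear hp
  obtain ⟨k, rfl⟩ : ∃ k, t3 = -k := ⟨-t3, by ring⟩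
  obtain rfl : t2 = k - t1 := by linarith
  have hNnn : 0 ≤ N := by rw [hN]; positivity
  have hN' : N = 9 * (t1 ^ 2 - t1 * k + k ^ 2) := by rw [hN]; ring
  have hb3 : h3 ≤ 0 := b3 (by linarith)
  rcases eq_or_lt_of_le (show 0 ≤ t1 by linarith) with h0 | ht
  · have hk : k = 0 := by linarith
    have : h1 ≤ 0 := b1 (by linarith)
    have : h2 ≤ 0 := b2 (by linarith)
    constructor
    · linarith
    · intro; linarith
  have hk : 0 < k := by linarith
  have hQ : 0 < t1 ^ 2 - t1 * k + k ^ 2 := by nlinarith [sq_nonneg (t1 - k), mul_pos ht hk]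
  set Q := t1 ^ 2 - t1 * k + k ^ 2 with hQd
  -- it suffices to show strict inequality outside the first case
  have strict : h1 + h2 < 4 / 27 → h1 + h2 + h3 ≤ 4 / 27 ∧
      (h1 + h2 + h3 = 4 / 27 → t1 = 4 / 27 ∧ k - t1 = -2 / 27 ∧ -k = -2 / 27) := by
    intro h
    exact ⟨by linarith, fun h' => by linarith⟩
  have strict' : (h1 + h2) * (t1 + k) < 4 / 27 * (t1 + k) → h1 + h2 < 4 / 27 := by
    intro h
    exact lt_of_mul_lt_mul_right h (by linarith)
  rcases le_total 0 (2 * t1 - N + -k) with hlo | hlo <;>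
    rcases le_total 0 (2 * (k - t1) - N + t1) with hhi | hhi
  · -- full first piece, partial second piece
    apply strict
    apply strict'
    have e1 := a1 hlo
    have e2 := c2 (by linarith) hhi
    have e1' := mul_le_mul_of_nonneg_right e1 (show 0 ≤ t1 + k by linarith)
    have key := amgm_lt (A := 2 * t1 ^ 2 + t1 * k + 2 * k ^ 2) (B := 9 * Q * (t1 + 2 * k))
      (C := 4 / 27 * (t1 + k)) (by positivity) (by positivity) (by
        have : 3 * (2 * t1 ^ 2 + t1 * k + 2 * k ^ 2) ^ 2
            < 16 * Q * (t1 + 2 * k) * (t1 + k) := by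
          rw [hQd]
          nlinarith [mul_nonneg (mul_pos ht hk).le (sq_nonneg (k - 2 * t1)),
            sq_nonneg (2 * t1 ^ 2 - 3 * k ^ 2), pow_pos hk 4, mul_pos (pow_pos ht 3) hk,
            mul_pos (pow_pos ht 2) (pow_pos hk 2)]
        nlinarith)
    rw [hN'] at *
    nlinarith
  · -- full first piece, empty second piece
    have e1 := a1 hlo
    have e2 := b2 hhi
    have hid : 2 * t1 - N = 4 / 27 - 27 / 4 * (t1 - 4 / 27) ^ 2 - 9 * (k - t1 / 2) ^ 2 := by
      rw [hN', hQd]; ring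
    refine ⟨by nlinarith [sq_nonneg (t1 - 4 / 27), sq_nonneg (k - t1 / 2)], fun h => ?_⟩
    have z1 : (t1 - 4 / 27) ^ 2 = 0 := by
      nlinarith [sq_nonneg (t1 - 4 / 27), sq_nonneg (k - t1 / 2)]
    have z2 : (k - t1 / 2) ^ 2 = 0 := by
      nlinarith [sq_nonneg (t1 - 4 / 27), sq_nonneg (k - t1 / 2)]
    have z1' := pow_eq_zero_iff (two_ne_zero) |>.1 z1
    have z2' := pow_eq_zero_iff (two_ne_zero) |>.1 z2
    exact ⟨by linarith, by linarith, by linarith⟩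
  · -- partial first and second piece
    apply strict
    apply strict'
    have e1 := c1 hlo (by linarith)
    have e2 := c2 (by linarith) hhi
    have key := amgm_lt (A := 2 * k * (t1 + k)) (B := 18 * k * Q)
      (C := 4 / 27 * (t1 + k)) (by positivity) (by positivity) (by
        have h8 : 3 * k * (t1 + k) < 8 * Q := by
          rw [hQd]
          nlinarith [sq_nonneg (16 * t1 - 11 * k), mul_pos hk hk]
        have h9 := mul_lt_mul_of_pos_right h8 (show 0 < k * (t1 + k) by positivity)
        nlinarith)
    rw [hN'] at *
    nlinarith
  · -- partial first piece, empty second piece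
    apply strict
    have e2 := b2 hhi
    rcases le_total 0 (2 * t1 - N + t1) with hhh | hhh
    · have e1 := c1 hlo hhh
      have key := amgm_lt (A := 3 * t1 * k) (B := 9 * k * Q)
        (C := 4 / 27 * (t1 + k)) (by positivity) (by positivity) (by
          have h8 : 27 * k * t1 ^ 2 < 16 * (t1 + k) * Q := by
            rw [hQd]
            nlinarith [mul_nonneg ht.le (sq_nonneg (4 * t1 - 5 * k)), mul_nonneg hk.le (sq_nonneg (4 * t1 - 5 * k)), pow_pos ht 3, pow_pos hk 3]
          have h9 := mul_lt_mul_of_pos_right h8 hk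
          nlinarith)
      apply strict'
      have e2' := mul_le_mul_of_nonneg_right e2 (show 0 ≤ t1 + k by linarith)
      rw [hN'] at *
      nlinarith
    · have := b1 hhh
      linarith

/-! ### Coordinates -/

@[simp] lemma pt_zero (a b : ℝ) : (pt a b) 0 = a := rfl
@[simp] lemma pt_one (a b : ℝ) : (pt a b) 1 = b := rfl

lemma E2_ext {x y : E2} (h0 : x 0 = y 0) (h1 : x 1 = y 1) : x = y := by
  ext i; fin_cases i
  · exact h0
  · exact h1

lemma nsq (x a : E2) : ‖x - a‖ ^ 2 = (x 0 - a 0) ^ 2 + (x 1 - a 1) ^ 2 := by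
  rw [EuclideanSpace.real_norm_sq_eq, Fin.sum_univ_two]; simp

lemma S1_0 (x : E2) : (S1 x) 0 = x 0 / 3 := by simp [S1]; ring
lemma S1_1 (x : E2) : (S1 x) 1 = x 1 / 3 := by simp [S1]; ring
lemma S2_0 (x : E2) : (S2 x) 0 = x 0 / 3 + 2 / 3 := by simp [S2]; ring
lemma S2_1 (x : E2) : (S2 x) 1 = x 1 / 3 := by simp [S2]; ring
lemma S3_0 (x : E2) : (S3 x) 0 = x 0 / 3 + 1 / 3 := by simp [S3]; ring
lemma S3_1 (x : E2) : (S3 x) 1 = x 1 / 3 + Real.sqrt 3 / 3 := by simp [S3]; ring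

lemma S1_cont : Continuous S1 := by unfold S1; fun_prop
lemma S2_cont : Continuous S2 := by unfold S2; fun_prop
lemma S3_cont : Continuous S3 := by unfold S3; fun_prop

/-! ### The measure -/

lemma measure_self (P : Measure E2)
    (hP : P = (3 : ℝ≥0∞)⁻¹ • (P.map S1 + P.map S2 + P.map S3)) {A : Set E2}
    (hA : MeasurableSet A) :
    P A = 3⁻¹ * (P (S1 ⁻¹' A) + P (S2 ⁻¹' A) + P (S3 ⁻¹' A)) := by
  conv_lhs => rw [hP]
  simp only [Measure.smul_apply, Measure.add_apply, smul_eq_mul]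
  rw [Measure.map_apply S1_cont.measurable hA, Measure.map_apply S2_cont.measurable hA,
    Measure.map_apply S3_cont.measurable hA]

lemma lintegral_self (P : Measure E2)
    (hP : P = (3 : ℝ≥0∞)⁻¹ • (P.map S1 + P.map S2 + P.map S3)) {f : E2 → ℝ≥0∞}
    (hf : Measurable f) :
    ∫⁻ x, f x ∂P = 3⁻¹ * (∫⁻ x, f (S1 x) ∂P + ∫⁻ x, f (S2 x) ∂P + ∫⁻ x, f (S3 x) ∂P) := by
  conv_lhs => rw [hP]
  rw [lintegral_smul_measure, lintegral_add_measure, lintegral_add_measure,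
    lintegral_map hf S1_cont.measurable, lintegral_map hf S2_cont.measurable,
    lintegral_map hf S3_cont.measurable, smul_eq_mul]

lemma third_le {a b c d : ℝ≥0∞} (ha : a ≤ d) (hb : b ≤ d) (hc : c ≤ d) :
    3⁻¹ * (a + b + c) ≤ d := by
  calc 3⁻¹ * (a + b + c) ≤ 3⁻¹ * (d + d + d) := by gcongr
    _ = 3⁻¹ * (3 * d) := by ring
    _ = d := by
      rw [← mul_assoc, ENNReal.inv_mul_cancel (by norm_num) (by norm_num), one_mul]

lemma ae_nonneg_of_self (P : Measure E2) [IsProbabilityMeasure P]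
    (hP : P = (3 : ℝ≥0∞)⁻¹ • (P.map S1 + P.map S2 + P.map S3)) (u : E2 → ℝ)
    (hu : Continuous u) (h1 : ∀ x, u x / 3 ≤ u (S1 x)) (h2 : ∀ x, u x / 3 ≤ u (S2 x))
    (h3 : ∀ x, u x / 3 ≤ u (S3 x)) : ∀ᵐ x ∂P, 0 ≤ u x := by
  have hm : ∀ t : ℝ, MeasurableSet {x | u x < -t} := fun t =>
    measurableSet_lt hu.measurable measurable_const
  have step : ∀ t : ℝ, P {x | u x < -t} ≤ P {x | u x < -(3 * t)} := by
    intro t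
    rw [measure_self P hP (hm t)]
    refine third_le ?_ ?_ ?_ <;> apply measure_mono <;> intro x hx <;>
      simp only [Set.mem_preimage, Set.mem_ofPred_eq] at hx ⊢
    · linarith [h1 x]
    · linarith [h2 x]
    · linarith [h3 x]
  have stepn : ∀ (t : ℝ) (n : ℕ), P {x | u x < -t} ≤ P {x | u x < -(3 ^ n * t)} := by
    intro t n
    induction n with
    | zero => simp
    | succ n ih =>
      refine ih.trans ((step _).trans (le_of_eq ?_))
      congr 3
      ring_nf
  have zero : ∀ t : ℝ, 0 < t → P {x | u x < -t} = 0 := by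
    intro t ht
    have hlim : Tendsto (fun n : ℕ => P {x | u x < -(3 ^ n * t)}) atTop
        (𝓝 (P (⋂ n : ℕ, {x | u x < -(3 ^ n * t)}))) := by
      apply tendsto_measure_iInter_atTop
      · intro n; exact (hm _).nullMeasurableSet
      · intro m n hmn x hx
        simp only [Set.mem_ofPred_eq] at hx ⊢
        have : (3 : ℝ) ^ m ≤ 3 ^ n := pow_le_pow_right₀ (by norm_num) hmn
        nlinarith
      · exact ⟨0, measure_ne_top _ _⟩
    have hemp : (⋂ n : ℕ, {x | u x < -(3 ^ n * t)}) = ∅ := by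
      ext x
      simp only [Set.mem_iInter, Set.mem_ofPred_eq, Set.mem_empty_iff_false, iff_false]
      push Not
      obtain ⟨n, hn⟩ := pow_unbounded_of_one_lt (-u x / t) (show (1 : ℝ) < 3 by norm_num)
      refine ⟨n, ?_⟩
      rw [div_lt_iff₀ ht] at hn
      linarith
    rw [hemp, measure_empty] at hlim
    exact le_antisymm (ge_of_tendsto' hlim (stepn t)) (zero_le)
  have hall : ∀ᵐ x ∂P, ∀ n : ℕ, -(1 / ((n : ℝ) + 1)) ≤ u x := by
    rw [ae_all_iff]
    intro n
    have := zero (1 / ((n : ℝ) + 1)) (by positivity)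
    rw [ae_iff]
    simpa only [not_le] using this
  filter_upwards [hall] with x hx
  by_contra hc
  push Not at hc
  obtain ⟨n, hn⟩ := exists_nat_one_div_lt (show 0 < -u x by linarith)
  linarith [hx n]

/-- Barycentric coordinates. -/
def u1 (x : E2) : ℝ := 1 - x 0 - x 1 * Real.sqrt 3 / 3
def u2 (x : E2) : ℝ := x 0 - x 1 * Real.sqrt 3 / 3
def u3 (x : E2) : ℝ := 2 * x 1 * Real.sqrt 3 / 3

lemma u1_cont : Continuous u1 := by unfold u1; fun_prop
lemma u2_cont : Continuous u2 := by unfold u2; fun_prop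
lemma u3_cont : Continuous u3 := by unfold u3; fun_prop

lemma sq3 : Real.sqrt 3 * Real.sqrt 3 = 3 := Real.mul_self_sqrt (by norm_num)

lemma u_sum (x : E2) : u1 x + u2 x + u3 x = 1 := by unfold u1 u2 u3; ring

lemma u_S (x : E2) :
    u1 (S1 x) = u1 x / 3 + 2 / 3 ∧ u2 (S1 x) = u2 x / 3 ∧ u3 (S1 x) = u3 x / 3 ∧
    u1 (S2 x) = u1 x / 3 ∧ u2 (S2 x) = u2 x / 3 + 2 / 3 ∧ u3 (S2 x) = u3 x / 3 ∧
    u1 (S3 x) = u1 x / 3 ∧ u2 (S3 x) = u2 x / 3 ∧ u3 (S3 x) = u3 x / 3 + 2 / 3 := by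
  unfold u1 u2 u3
  rw [S1_0, S1_1, S2_0, S2_1, S3_0, S3_1]
  refine ⟨?_, ?_, ?_, ?_, ?_, ?_, ?_, ?_, ?_⟩ <;> linarith [sq3]

lemma ae_tri (P : Measure E2) [IsProbabilityMeasure P]
    (hP : P = (3 : ℝ≥0∞)⁻¹ • (P.map S1 + P.map S2 + P.map S3)) :
    ∀ᵐ x ∂P, 0 ≤ u1 x ∧ 0 ≤ u2 x ∧ 0 ≤ u3 x := by
  have a1 := ae_nonneg_of_self P hP u1 u1_cont (fun x => by linarith [(u_S x).1])
    (fun x => by linarith [(u_S x).2.2.2.1]) (fun x => by linarith [(u_S x).2.2.2.2.2.2.1])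
  have a2 := ae_nonneg_of_self P hP u2 u2_cont (fun x => by linarith [(u_S x).2.1])
    (fun x => by linarith [(u_S x).2.2.2.2.1]) (fun x => by linarith [(u_S x).2.2.2.2.2.2.2.1])
  have a3 := ae_nonneg_of_self P hP u3 u3_cont (fun x => by linarith [(u_S x).2.2.1])
    (fun x => by linarith [(u_S x).2.2.2.2.2.1]) (fun x => by linarith [(u_S x).2.2.2.2.2.2.2.2])
  filter_upwards [a1, a2, a3] with x b1 b2 b3 using ⟨b1, b2, b3⟩

lemma integrable_cont (P : Measure E2) [IsProbabilityMeasure P]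
    (hP : P = (3 : ℝ≥0∞)⁻¹ • (P.map S1 + P.map S2 + P.map S3)) {f : E2 → ℝ}
    (hf : Continuous f) : Integrable f P := by
  obtain ⟨C, hC⟩ := (isCompact_closedBall (0 : E2) 2).exists_bound_of_continuousOn hf.continuousOn
  refine Integrable.of_bound hf.aestronglyMeasurable C ?_
  filter_upwards [ae_tri P hP] with x hx
  apply hC
  rw [mem_closedBall_zero_iff]
  obtain ⟨h1, h2, h3⟩ := hx
  have hn := nsq x 0
  simp only [sub_zero, PiLp.zero_apply] at hn
  unfold u1 at h1
  unfold u2 at h2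
  unfold u3 at h3
  have hs : 1 ≤ Real.sqrt 3 := by
    rw [Real.le_sqrt' (by norm_num)]; norm_num
  have hy : 0 ≤ x 1 := by
    by_contra hc
    push Not at hc
    nlinarith
  have hy' : x 1 ≤ x 1 * Real.sqrt 3 := by nlinarith
  have hx1 : x 0 ≤ 1 := by linarith
  have hx0 : 0 ≤ x 0 := by linarith
  have hyy : x 1 ≤ 3 / 2 := by linarith
  have : ‖x‖ ^ 2 ≤ 2 ^ 2 := by rw [hn]; nlinarith
  exact le_of_sq_le_sq this (by norm_num)

lemma integral_self (P : Measure E2) [IsProbabilityMeasure P]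
    (hP : P = (3 : ℝ≥0∞)⁻¹ • (P.map S1 + P.map S2 + P.map S3)) {f : E2 → ℝ}
    (hf : Continuous f) :
    ∫ x, f x ∂P = (∫ x, f (S1 x) ∂P + ∫ x, f (S2 x) ∂P + ∫ x, f (S3 x) ∂P) / 3 := by
  have i1 : Integrable f (P.map S1) := (integrable_map_measure hf.aestronglyMeasurable
    S1_cont.aemeasurable).2 (integrable_cont P hP (hf.comp S1_cont))
  have i2 : Integrable f (P.map S2) := (integrable_map_measure hf.aestronglyMeasurable
    S2_cont.aemeasurable).2 (integrable_cont P hP (hf.comp S2_cont))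
  have i3 : Integrable f (P.map S3) := (integrable_map_measure hf.aestronglyMeasurable
    S3_cont.aemeasurable).2 (integrable_cont P hP (hf.comp S3_cont))
  conv_lhs => rw [hP]
  rw [integral_smul_measure, integral_add_measure (i1.add_measure i2) i3,
    integral_add_measure i1 i2, integral_map S1_cont.aemeasurable hf.aestronglyMeasurable,
    integral_map S2_cont.aemeasurable hf.aestronglyMeasurable,
    integral_map S3_cont.aemeasurable hf.aestronglyMeasurable]
  simp
  ring

lemma mean_u (P : Measure E2) [IsProbabilityMeasure P]
    (hP : P = (3 : ℝ≥0∞)⁻¹ • (P.map S1 + P.map S2 + P.map S3)) :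
    ∫ x, u1 x ∂P = 1 / 3 ∧ ∫ x, u2 x ∂P = 1 / 3 ∧ ∫ x, u3 x ∂P = 1 / 3 := by
  have i1 := integrable_cont P hP u1_cont
  have i2 := integrable_cont P hP u2_cont
  have i3 := integrable_cont P hP u3_cont
  have e1 := integral_self P hP u1_cont
  have e2 := integral_self P hP u2_cont
  have e3 := integral_self P hP u3_cont
  simp only [fun x => (u_S x).1, fun x => (u_S x).2.1, fun x => (u_S x).2.2.1,
    fun x => (u_S x).2.2.2.1, fun x => (u_S x).2.2.2.2.1, fun x => (u_S x).2.2.2.2.2.1,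
    fun x => (u_S x).2.2.2.2.2.2.1, fun x => (u_S x).2.2.2.2.2.2.2.1,
    fun x => (u_S x).2.2.2.2.2.2.2.2] at e1 e2 e3
  rw [integral_add (i1.div_const 3) (integrable_const _), integral_div] at e1
  rw [integral_add (i2.div_const 3) (integrable_const _), integral_div] at e2
  rw [integral_add (i3.div_const 3) (integrable_const _), integral_div] at e3
  simp at e1 e2 e3
  refine ⟨?_, ?_, ?_⟩ <;> linarith

/-- The barycentre. -/
def cc : E2 := pt (1/2) (Real.sqrt 3 / 6)

lemma d_cont (a : E2) : Continuous (fun x : E2 => ‖x - a‖ ^ 2) := by fun_prop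

lemma d_S (x : E2) :
    ‖S1 x - cc‖ ^ 2 + ‖S2 x - cc‖ ^ 2 + ‖S3 x - cc‖ ^ 2 = ‖x - cc‖ ^ 2 / 3 + 4 / 9 := by
  simp only [nsq, S1_0, S1_1, S2_0, S2_1, S3_0, S3_1, cc, pt_zero, pt_one]
  linear_combination (2 / 27 : ℝ) * sq3

lemma variance (P : Measure E2) [IsProbabilityMeasure P]
    (hP : P = (3 : ℝ≥0∞)⁻¹ • (P.map S1 + P.map S2 + P.map S3)) :
    ∫ x, ‖x - cc‖ ^ 2 ∂P = 1 / 6 := by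
  have e := integral_self P hP (d_cont cc)
  have i1 : Integrable (fun x => ‖S1 x - cc‖ ^ 2) P :=
    integrable_cont P hP ((d_cont cc).comp S1_cont)
  have i2 : Integrable (fun x => ‖S2 x - cc‖ ^ 2) P :=
    integrable_cont P hP ((d_cont cc).comp S2_cont)
  have i3 : Integrable (fun x => ‖S3 x - cc‖ ^ 2) P :=
    integrable_cont P hP ((d_cont cc).comp S3_cont)
  have i := integrable_cont P hP (d_cont cc)
  have e' : ∫ x, ‖S1 x - cc‖ ^ 2 ∂P + ∫ x, ‖S2 x - cc‖ ^ 2 ∂P + ∫ x, ‖S3 x - cc‖ ^ 2 ∂P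
      = ∫ x, (‖x - cc‖ ^ 2 / 3 + 4 / 9) ∂P := by
    rw [← integral_add i1 i2, ← integral_add (by exact i1.add i2) i3]
    exact integral_congr_ae (Eventually.of_forall d_S)
  rw [integral_add (i.div_const 3) (integrable_const _), integral_div] at e'
  simp at e'
  linarith

/-! ### The bound for one cell -/

lemma piece_bound (P : Measure E2) [IsProbabilityMeasure P]
    (hP : P = (3 : ℝ≥0∞)⁻¹ • (P.map S1 + P.map S2 + P.map S3)) (p1 p2 p3 b m M : ℝ)
    (hs : p1 + p2 + p3 = 0) (hm : m ≤ p1 ∧ m ≤ p2 ∧ m ≤ p3) (hM : p1 ≤ M ∧ p2 ≤ M ∧ p3 ≤ M) :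
    (0 ≤ b + m → ∫ x, max (b + (u1 x * p1 + u2 x * p2 + u3 x * p3)) 0 ∂P ≤ b) ∧
    (b + M ≤ 0 → ∫ x, max (b + (u1 x * p1 + u2 x * p2 + u3 x * p3)) 0 ∂P ≤ 0) ∧
    (b + m ≤ 0 → 0 ≤ b + M →
      (∫ x, max (b + (u1 x * p1 + u2 x * p2 + u3 x * p3)) 0 ∂P) * (M - m) ≤ (b + M) * (-m)) := by
  have c1 := u1_cont
  have c2 := u2_cont
  have c3 := u3_cont
  have hfc : Continuous (fun x => b + (u1 x * p1 + u2 x * p2 + u3 x * p3)) := by fun_prop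
  set f := fun x => b + (u1 x * p1 + u2 x * p2 + u3 x * p3) with hf
  have hfi := integrable_cont P hP hfc
  have hmean : ∫ x, f x ∂P = b := by
    have i1 := (integrable_cont P hP c1).mul_const p1
    have i2 := (integrable_cont P hP c2).mul_const p2
    have i3 := (integrable_cont P hP c3).mul_const p3
    obtain ⟨m1, m2, m3⟩ := mean_u P hP
    simp only [hf]
    have i12 : Integrable (fun x => u1 x * p1 + u2 x * p2) P := i1.add i2
    have i123 : Integrable (fun x => u1 x * p1 + u2 x * p2 + u3 x * p3) P := i12.add i3
    rw [integral_add (integrable_const _) i123, integral_add i12 i3,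
      integral_add i1 i2, integral_mul_const, integral_mul_const, integral_mul_const, m1, m2, m3]
    simp
    linarith
  have hb : ∀ᵐ x ∂P, b + m ≤ f x ∧ f x ≤ b + M := by
    filter_upwards [ae_tri P hP] with x hx
    obtain ⟨h1, h2, h3⟩ := hx
    have hsx := u_sum x
    have em : m = u1 x * m + u2 x * m + u3 x * m := by rw [← add_mul, ← add_mul, hsx, one_mul]
    have eM : M = u1 x * M + u2 x * M + u3 x * M := by rw [← add_mul, ← add_mul, hsx, one_mul]
    simp only [hf]
    constructor
    · linarith [mul_le_mul_of_nonneg_left hm.1 h1, mul_le_mul_of_nonneg_left hm.2.1 h2,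
        mul_le_mul_of_nonneg_left hm.2.2 h3]
    · linarith [mul_le_mul_of_nonneg_left hM.1 h1, mul_le_mul_of_nonneg_left hM.2.1 h2,
        mul_le_mul_of_nonneg_left hM.2.2 h3]
  have hmaxi : Integrable (fun x => max (f x) 0) P := integrable_cont P hP (by fun_prop)
  refine ⟨fun h => ?_, fun h => ?_, fun hl hh => ?_⟩
  · refine le_trans ?_ hmean.le
    apply integral_mono_ae hmaxi hfi
    filter_upwards [hb] with x hx
    exact max_le le_rfl (by linarith)
  · apply integral_nonpos_of_ae
    filter_upwards [hb] with x hx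
    exact max_le (hx.2.trans h) le_rfl
  · have : ∫ x, (max (f x) 0) * (M - m) ∂P ≤ ∫ x, (b + M) * (f x - (b + m)) ∂P := by
      have hsub : Integrable (fun x => f x - (b + m)) P := hfi.sub (integrable_const _)
      apply integral_mono_ae (hmaxi.mul_const _) (hsub.const_mul _)
      filter_upwards [hb] with x hx
      obtain ⟨hx1, hx2⟩ := hx
      rcases le_total (f x) 0 with h0 | h0
      · simp only [max_eq_right h0, zero_mul]
        exact mul_nonneg hh (by linarith)
      · simp only [max_eq_left h0]
        nlinarith
    rw [integral_mul_const, integral_const_mul, integral_sub hfi (integrable_const _), hmean] at this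
    simp at this
    linarith

set_option maxHeartbeats 2000000 in
lemma H_bound (P : Measure E2) [IsProbabilityMeasure P]
    (hP : P = (3 : ℝ≥0∞)⁻¹ • (P.map S1 + P.map S2 + P.map S3)) (a : E2) :
    ∫ x, max (‖x - cc‖ ^ 2 - ‖x - a‖ ^ 2) 0 ∂P ≤ 4 / 81 ∧
    (∫ x, max (‖x - cc‖ ^ 2 - ‖x - a‖ ^ 2) 0 ∂P = 4 / 81 →
      a = pt (1/6) (Real.sqrt 3 / 18) ∨ a = pt (5/6) (Real.sqrt 3 / 18) ∨
      a = pt (1/2) (7 * Real.sqrt 3 / 18)) := by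
  have hr := sq3
  set r := Real.sqrt 3 with hrd
  set q0 := a 0 - 1 / 2 with hq0
  set q1 := a 1 - r / 6 with hq1
  set N := q0 ^ 2 + q1 ^ 2 with hN
  obtain ⟨t1, ht1⟩ : ∃ t, t = - q0 / 3 - q1 * r / 9 := ⟨_, rfl⟩
  obtain ⟨t2, ht2⟩ : ∃ t, t = q0 / 3 - q1 * r / 9 := ⟨_, rfl⟩
  obtain ⟨t3, ht3⟩ : ∃ t, t = 2 * q1 * r / 9 := ⟨_, rfl⟩
  have hts : t1 + t2 + t3 = 0 := by rw [ht1, ht2, ht3]; ring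
  have hNt : N = 9 / 2 * (t1 ^ 2 + t2 ^ 2 + t3 ^ 2) := by
    rw [ht1, ht2, ht3, hN]; linear_combination (-q1 ^ 2 / 3) * hr
  have g1 : ∀ x, ‖S1 x - cc‖ ^ 2 - ‖S1 x - a‖ ^ 2
      = 2 * t1 - N + (u1 x * t1 + u2 x * t2 + u3 x * t3) := by
    intro x
    simp only [nsq, S1_0, S1_1, cc, pt_zero, pt_one, u1, u2, u3, ← hrd]
    rw [show a 0 = q0 + 1 / 2 by rw [hq0]; ring, show a 1 = q1 + r / 6 by rw [hq1]; ring,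
      ht1, ht2, ht3, hN]
    linear_combination (-2 / 9 * x 1 * q1) * hr
  have g2 : ∀ x, ‖S2 x - cc‖ ^ 2 - ‖S2 x - a‖ ^ 2
      = 2 * t2 - N + (u1 x * t1 + u2 x * t2 + u3 x * t3) := by
    intro x
    simp only [nsq, S2_0, S2_1, cc, pt_zero, pt_one, u1, u2, u3, ← hrd]
    rw [show a 0 = q0 + 1 / 2 by rw [hq0]; ring, show a 1 = q1 + r / 6 by rw [hq1]; ring,
      ht1, ht2, ht3, hN]
    linear_combination (-2 / 9 * x 1 * q1) * hr
  have g3 : ∀ x, ‖S3 x - cc‖ ^ 2 - ‖S3 x - a‖ ^ 2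
      = 2 * t3 - N + (u1 x * t1 + u2 x * t2 + u3 x * t3) := by
    intro x
    simp only [nsq, S3_0, S3_1, cc, pt_zero, pt_one, u1, u2, u3, ← hrd]
    rw [show a 0 = q0 + 1 / 2 by rw [hq0]; ring, show a 1 = q1 + r / 6 by rw [hq1]; ring,
      ht1, ht2, ht3, hN]
    linear_combination (-2 / 9 * x 1 * q1) * hr
  have hself := integral_self P hP
    (f := fun x => max (‖x - cc‖ ^ 2 - ‖x - a‖ ^ 2) 0) (by fun_prop)
  simp only [g1, g2, g3] at hself
  have pb := fun t m M => piece_bound P hP t1 t2 t3 (2 * t - N) m M hts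
  obtain ⟨F, hF⟩ : ∃ F : ℝ → ℝ, ∀ t, F t =
    ∫ x, max (2 * t - N + (u1 x * t1 + u2 x * t2 + u3 x * t3)) 0 ∂P := ⟨_, fun _ => rfl⟩
  simp only [← hF] at hself pb
  rw [hself]
  have fin : F t1 + F t2 + F t3 ≤ 4 / 27 ∧ (F t1 + F t2 + F t3 = 4 / 27 →
      (t2 = -2 / 27 ∧ t3 = -2 / 27) ∨ (t1 = -2 / 27 ∧ t3 = -2 / 27) ∨
      (t1 = -2 / 27 ∧ t2 = -2 / 27)) := by
    have main : ∀ s1 s2 s3 : ℝ, s2 ≤ s1 → s3 ≤ s2 → s1 + s2 + s3 = 0 →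
        N = 9 / 2 * (s1 ^ 2 + s2 ^ 2 + s3 ^ 2) → (s3 ≤ t1 ∧ s3 ≤ t2 ∧ s3 ≤ t3) →
        (t1 ≤ s1 ∧ t2 ≤ s1 ∧ t3 ≤ s1) → F s1 + F s2 + F s3 ≤ 4 / 27 ∧
        (F s1 + F s2 + F s3 = 4 / 27 → s2 = -2 / 27 ∧ s3 = -2 / 27) := by
      intro s1 s2 s3 h12 h23 hs hNs hlo hhi
      have := core_ordered s1 s2 s3 N (F s1) (F s2) (F s3) h12 h23 hs hNs (by
        rintro t h (⟨rfl, rfl⟩ | ⟨rfl, rfl⟩ | ⟨rfl, rfl⟩) <;> exact pb _ _ _ hlo hhi)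
      exact ⟨this.1, fun h => (this.2 h).2⟩
    rcases le_total t1 t2 with h12 | h12 <;> rcases le_total t2 t3 with h23 | h23 <;>
      rcases le_total t1 t3 with h13 | h13
    · have := main t3 t2 t1 h23 h12 (by linarith) (by linarith) ⟨by linarith, by linarith, by linarith⟩
        ⟨by linarith, by linarith, by linarith⟩
      exact ⟨by linarith [this.1], fun h => by have := this.2 (by linarith); tauto⟩
    · have := main t3 t2 t1 h23 h12 (by linarith) (by linarith) ⟨by linarith, by linarith, by linarith⟩
        ⟨by linarith, by linarith, by linarith⟩
      exact ⟨by linarith [this.1], fun h => by have := this.2 (by linarith); tauto⟩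
    · have := main t2 t3 t1 h23 h13 (by linarith) (by linarith) ⟨by linarith, by linarith, by linarith⟩
        ⟨by linarith, by linarith, by linarith⟩
      exact ⟨by linarith [this.1], fun h => by have := this.2 (by linarith); tauto⟩
    · have := main t2 t1 t3 h12 h13 (by linarith) (by linarith) ⟨by linarith, by linarith, by linarith⟩
        ⟨by linarith, by linarith, by linarith⟩
      exact ⟨by linarith [this.1], fun h => by have := this.2 (by linarith); tauto⟩
    · have := main t3 t1 t2 h13 h12 (by linarith) (by linarith) ⟨by linarith, by linarith, by linarith⟩
        ⟨by linarith, by linarith, by linarith⟩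
      exact ⟨by linarith [this.1], fun h => by have := this.2 (by linarith); tauto⟩
    · have := main t1 t3 t2 h13 h23 (by linarith) (by linarith) ⟨by linarith, by linarith, by linarith⟩
        ⟨by linarith, by linarith, by linarith⟩
      exact ⟨by linarith [this.1], fun h => by have := this.2 (by linarith); tauto⟩
    · have := main t1 t2 t3 h12 h23 (by linarith) (by linarith) ⟨by linarith, by linarith, by linarith⟩
        ⟨by linarith, by linarith, by linarith⟩
      exact ⟨by linarith [this.1], fun h => by have := this.2 (by linarith); tauto⟩
    · have := main t1 t2 t3 h12 h23 (by linarith) (by linarith) ⟨by linarith, by linarith, by linarith⟩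
        ⟨by linarith, by linarith, by linarith⟩
      exact ⟨by linarith [this.1], fun h => by have := this.2 (by linarith); tauto⟩
  refine ⟨by linarith [fin.1], fun h => ?_⟩
  have e0 : a 0 = 1 / 2 + 3 / 2 * (t2 - t1) := by rw [ht1, ht2, hq0]; ring
  have e1 : a 1 = r / 6 + 3 * r / 2 * t3 := by
    rw [ht3, hq1]; linear_combination (-(a 1 - r / 6) / 3) * hr
  rcases fin.2 (by linarith) with ⟨z1, z2⟩ | ⟨z1, z2⟩ | ⟨z1, z2⟩
  · have z3 : t1 = 4 / 27 := by linarith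
    left
    apply E2_ext
    · rw [e0, z1, z3, pt_zero]; norm_num
    · rw [e1, z2, pt_one]; ring
  · have z3 : t2 = 4 / 27 := by linarith
    right; left
    apply E2_ext
    · rw [e0, z1, z3, pt_zero]; norm_num
    · rw [e1, z2, pt_one]; ring
  · have z3 : t3 = 4 / 27 := by linarith
    right; right
    apply E2_ext
    · rw [e0, z1, z2, pt_zero]; norm_num
    · rw [e1, z3, pt_one]; ring

/-! ### Errors -/

lemma err_lower (P : Measure E2) [IsProbabilityMeasure P]
    (hP : P = (3 : ℝ≥0∞)⁻¹ • (P.map S1 + P.map S2 + P.map S3)) (s : Finset E2) :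
    ENNReal.ofReal (1 / 6) ≤ err P (s : Set E2) +
      ENNReal.ofReal (∑ a ∈ s, ∫ x, max (‖x - cc‖ ^ 2 - ‖x - a‖ ^ 2) 0 ∂P) := by
  have key : ∀ x : E2, ENNReal.ofReal (‖x - cc‖ ^ 2) ≤
      (⨅ a ∈ (s : Set E2), ENNReal.ofReal (‖x - a‖ ^ 2)) +
      ENNReal.ofReal (∑ a ∈ s, max (‖x - cc‖ ^ 2 - ‖x - a‖ ^ 2) 0) := by
    intro x
    rw [← tsub_le_iff_right]
    refine le_iInf₂ fun a ha => ?_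
    rw [tsub_le_iff_right, ← ENNReal.ofReal_add (by positivity)
      (Finset.sum_nonneg fun _ _ => le_max_right _ _)]
    apply ENNReal.ofReal_le_ofReal
    have := Finset.single_le_sum (f := fun a => max (‖x - cc‖ ^ 2 - ‖x - a‖ ^ 2) 0)
      (fun _ _ => le_max_right _ _) (Finset.mem_coe.1 ha)
    have h2 := le_max_left (‖x - cc‖ ^ 2 - ‖x - a‖ ^ 2) 0
    linarith
  have hc : Continuous (fun x : E2 => ∑ a ∈ s, max (‖x - cc‖ ^ 2 - ‖x - a‖ ^ 2) 0) := by fun_prop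
  rw [← variance P hP, ← integral_finsetSum _ (fun a _ => integrable_cont P hP (by fun_prop)),
    ofReal_integral_eq_lintegral_ofReal (integrable_cont P hP (d_cont cc))
      (Eventually.of_forall fun _ => by positivity),
    ofReal_integral_eq_lintegral_ofReal (integrable_cont P hP hc)
      (Eventually.of_forall fun _ => Finset.sum_nonneg fun _ _ => le_max_right _ _),
    err, ← lintegral_add_right _ hc.measurable.ennreal_ofReal]
  exact lintegral_mono key

lemma err_opt (P : Measure E2) [IsProbabilityMeasure P]
    (hP : P = (3 : ℝ≥0∞)⁻¹ • (P.map S1 + P.map S2 + P.map S3)) :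
    err P {pt (1/6) (Real.sqrt 3 / 18), pt (5/6) (Real.sqrt 3 / 18),
            pt (1/2) (7 * Real.sqrt 3 / 18)} ≤ ENNReal.ofReal (1 / 54) := by
  set B : Set E2 := {pt (1/6) (Real.sqrt 3 / 18), pt (5/6) (Real.sqrt 3 / 18),
            pt (1/2) (7 * Real.sqrt 3 / 18)} with hB
  have hBc : B.Countable := (Set.toFinite B).countable
  have hmeas : Measurable fun x : E2 => ⨅ a ∈ B, ENNReal.ofReal (‖x - a‖ ^ 2) :=
    Measurable.biInf B hBc fun a _ => (d_cont a).measurable.ennreal_ofReal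
  have hi : ∫⁻ x, ENNReal.ofReal (‖x - cc‖ ^ 2 / 9) ∂P = ENNReal.ofReal (1 / 54) := by
    rw [← ofReal_integral_eq_lintegral_ofReal ((integrable_cont P hP (d_cont cc)).div_const 9)
      (Eventually.of_forall fun _ => by positivity), integral_div, variance P hP]
    norm_num
  rw [err, lintegral_self P hP hmeas, ← hi]
  refine third_le ?_ ?_ ?_ <;> refine lintegral_mono fun x => ?_
  · refine (iInf₂_le (pt (1/6) (Real.sqrt 3 / 18)) (by simp [hB])).trans (le_of_eq ?_)
    congr 1
    simp only [nsq, S1_0, S1_1, cc, pt_zero, pt_one]; ring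
  · refine (iInf₂_le (pt (5/6) (Real.sqrt 3 / 18)) (by simp [hB])).trans (le_of_eq ?_)
    congr 1
    simp only [nsq, S2_0, S2_1, cc, pt_zero, pt_one]; ring
  · refine (iInf₂_le (pt (1/2) (7 * Real.sqrt 3 / 18)) (by simp [hB])).trans (le_of_eq ?_)
    congr 1
    simp only [nsq, S3_0, S3_1, cc, pt_zero, pt_one]; ring

lemma ncard_B : ({pt (1/6) (Real.sqrt 3 / 18), pt (5/6) (Real.sqrt 3 / 18),
            pt (1/2) (7 * Real.sqrt 3 / 18)} : Set E2).ncard ≤ 3 := by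
  refine (Set.ncard_insert_le _ _).trans ?_
  have := Set.ncard_insert_le (pt (5/6) (Real.sqrt 3 / 18)) {pt (1/2) (7 * Real.sqrt 3 / 18)}
  rw [Set.ncard_singleton] at this
  omega

lemma err_ge (P : Measure E2) [IsProbabilityMeasure P]
    (hP : P = (3 : ℝ≥0∞)⁻¹ • (P.map S1 + P.map S2 + P.map S3)) (s : Finset E2)
    (hs : s.card ≤ 3) : ENNReal.ofReal (1 / 54) ≤ err P (s : Set E2) ∧
      (err P (s : Set E2) = ENNReal.ofReal (1 / 54) →
        (s : Set E2) = {pt (1/6) (Real.sqrt 3 / 18), pt (5/6) (Real.sqrt 3 / 18),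
            pt (1/2) (7 * Real.sqrt 3 / 18)}) := by
  have hl := err_lower P hP s
  have hnn : ∀ a, 0 ≤ ∫ x, max (‖x - cc‖ ^ 2 - ‖x - a‖ ^ 2) 0 ∂P := fun a =>
    integral_nonneg fun _ => le_max_right _ _
  have hb := H_bound P hP
  obtain ⟨H, hH⟩ : ∃ H : E2 → ℝ, ∀ a, H a = ∫ x, max (‖x - cc‖ ^ 2 - ‖x - a‖ ^ 2) 0 ∂P :=
    ⟨_, fun _ => rfl⟩
  simp only [← hH] at hl hnn hb
  have hsum : ∑ a ∈ s, H a ≤ s.card * (4 / 81) := by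
    have := Finset.sum_le_card_nsmul s H (4 / 81) fun a _ => (hb a).1
    simpa using this
  have hcard : (s.card : ℝ) ≤ 3 := by exact_mod_cast hs
  have hsum' : ∑ a ∈ s, H a ≤ 4 / 27 := by linarith
  constructor
  · have h1 : ENNReal.ofReal (1 / 54) + ENNReal.ofReal (4 / 27) ≤
        err P (s : Set E2) + ENNReal.ofReal (4 / 27) := by
      rw [← ENNReal.ofReal_add (by norm_num) (by norm_num)]
      norm_num only
      norm_num only at hl
      exact hl.trans (by gcongr)
    exact (ENNReal.add_le_add_iff_right ENNReal.ofReal_ne_top).1 h1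
  · intro he
    rw [he, ← ENNReal.ofReal_add (by norm_num) (Finset.sum_nonneg fun a _ => hnn a),
      ENNReal.ofReal_le_ofReal_iff
        (by have := Finset.sum_nonneg (s := s) fun a _ => hnn a; linarith)] at hl
    have hc3 : s.card = 3 := by
      by_contra hne
      have : s.card ≤ 2 := by omega
      have : (s.card : ℝ) ≤ 2 := by exact_mod_cast this
      linarith
    have heq : ∀ a ∈ s, H a = 4 / 81 := by
      by_contra hc
      push Not at hc
      obtain ⟨a, ha, hne⟩ := hc
      have hlt : ∑ a ∈ s, H a < ∑ a ∈ s, (4 / 81 : ℝ) :=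
        Finset.sum_lt_sum (fun a _ => (hb a).1) ⟨a, ha, lt_of_le_of_ne (hb a).1 hne⟩
      simp [hc3] at hlt
      linarith
    apply Set.eq_of_subset_of_ncard_le
    · intro a ha
      have := (hb a).2 (heq a ha)
      simpa using this
    · rw [Set.ncard_coe_finset, hc3]; exact ncard_B
    · exact Set.toFinite _

/-- The set {S₁(c), S₂(c), S₃(c)} = {(1/6, √3/18), (5/6, √3/18), (1/2, 7√3/18)}, where
c = (1/2, √3/6), is the unique optimal set of three-means for the R-measure P, and
V₃(P) = 1/54. -/
theorem stmt_8 (P : Measure E2) [IsProbabilityMeasure P]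
    (hP : P = (3 : ℝ≥0∞)⁻¹ • (P.map S1 + P.map S2 + P.map S3)) :
    ({S1 (pt (1/2) (Real.sqrt 3 / 6)), S2 (pt (1/2) (Real.sqrt 3 / 6)),
        S3 (pt (1/2) (Real.sqrt 3 / 6))} : Set E2)
        = {pt (1/6) (Real.sqrt 3 / 18), pt (5/6) (Real.sqrt 3 / 18),
            pt (1/2) (7 * Real.sqrt 3 / 18)}
      ∧ IsOptimal P 3 {pt (1/6) (Real.sqrt 3 / 18), pt (5/6) (Real.sqrt 3 / 18),
          pt (1/2) (7 * Real.sqrt 3 / 18)}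
      ∧ (∀ β : Set E2, IsOptimal P 3 β →
          β = {pt (1/6) (Real.sqrt 3 / 18), pt (5/6) (Real.sqrt 3 / 18),
                pt (1/2) (7 * Real.sqrt 3 / 18)})
      ∧ quantErr P 3 = 1 / 54 := by
  set B : Set E2 := {pt (1/6) (Real.sqrt 3 / 18), pt (5/6) (Real.sqrt 3 / 18),
            pt (1/2) (7 * Real.sqrt 3 / 18)} with hB
  have hge : ∀ α : Set E2, α.Finite ∧ α.ncard ≤ 3 → ENNReal.ofReal (1 / 54) ≤ err P α ∧
      (err P α = ENNReal.ofReal (1 / 54) → α = B) := by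
    rintro α ⟨hfin, hc⟩
    obtain ⟨s, rfl⟩ := hfin.exists_finset_coe
    rw [Set.ncard_coe_finset] at hc
    exact err_ge P hP s hc
  have hBfin : B.Finite := Set.toFinite B
  have hBe : err P B = ENNReal.ofReal (1 / 54) :=
    le_antisymm (err_opt P hP) (hge B ⟨hBfin, ncard_B⟩).1
  have hq : quantErr P 3 = ENNReal.ofReal (1 / 54) := by
    apply le_antisymm
    · rw [← hBe]
      exact iInf₂_le B ⟨hBfin, ncard_B⟩
    · exact le_iInf₂ fun α hα => (hge α hα).1
  refine ⟨?_, ⟨hBfin, ncard_B, hBe.trans hq.symm⟩, ?_, ?_⟩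
  · have e1 : S1 (pt (1/2) (Real.sqrt 3 / 6)) = pt (1/6) (Real.sqrt 3 / 18) := by
      apply E2_ext
      · rw [S1_0, pt_zero, pt_zero]; norm_num
      · rw [S1_1, pt_one, pt_one]; ring
    have e2 : S2 (pt (1/2) (Real.sqrt 3 / 6)) = pt (5/6) (Real.sqrt 3 / 18) := by
      apply E2_ext
      · rw [S2_0, pt_zero, pt_zero]; norm_num
      · rw [S2_1, pt_one, pt_one]; ring
    have e3 : S3 (pt (1/2) (Real.sqrt 3 / 6)) = pt (1/2) (7 * Real.sqrt 3 / 18) := by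
      apply E2_ext
      · rw [S3_0, pt_zero, pt_zero]; norm_num
      · rw [S3_1, pt_one, pt_one]; ring
    rw [e1, e2, e3]
  · rintro β ⟨h1, h2, h3⟩
    exact (hge β ⟨h1, h2⟩).2 (h3.trans hq)
  · rw [hq, ENNReal.ofReal_div_of_pos (by norm_num)]
    simp

end
end

section
/- Let P be the R-measure, n ≥ 3, and let α be an optimal set of n-means for P. For 1 ≤ i ≤ 3 set β_i := α ∩ △_i and n_i := card(β_i), where △_i = S_i(△) and △ is the closed triangle with vertices (0,0), (1,0), (1/2, √3/2) (the convex hull of these three points). Then for each i, the set S_i⁻¹(β_i) (the image of β_i under the inverse of S_i) is an optimal set of n_i-means for P, and V_n(P) = ∑_{i=1}^{3} (1/27)·V_{n_i}(P). -/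
open MeasureTheory ENNReal

noncomputable section

namespace RM

/-- The vertices of the triangle. -/
def v : Fin 3 → E2 := ![pt 0 0, pt 1 0, pt (1/2) (Real.sqrt 3 / 2)]

/-- The centroid. -/
def c : E2 := pt (1/2) (Real.sqrt 3 / 6)

def e (i : Fin 3) : E2 := v i - c

lemma Smap_eq (i : Fin 3) (x : E2) : Smap i x = (3:ℝ)⁻¹ • x + (2/3:ℝ) • v i := by
  fin_cases i <;> ext k <;> fin_cases k <;> simp [Smap, S1, S2, S3, v, pt] <;> ring

lemma inner_pt (a b a' b' : ℝ) : inner ℝ (pt a b) (pt a' b') = a * a' + b * b' := by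
  simp [pt, PiLp.inner_apply, Fin.sum_univ_two]; ring

lemma pt_sub (a b a' b' : ℝ) : pt a b - pt a' b' = pt (a - a') (b - b') := by
  ext k; fin_cases k <;> simp [pt]

lemma s3 : Real.sqrt 3 * Real.sqrt 3 = 3 := Real.mul_self_sqrt (by norm_num)

lemma inner_e_self (i : Fin 3) : inner ℝ (e i) (e i) = (1/3 : ℝ) := by
  have := s3
  fin_cases i <;> simp only [e, v, c, Fin.isValue, Fin.zero_eta, Fin.mk_one, Fin.reduceFinMk, Matrix.cons_val_zero, Matrix.cons_val_one, Matrix.cons_val, pt_sub, inner_pt] <;> nlinarith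

lemma inner_e_ne {i j : Fin 3} (h : i ≠ j) : inner ℝ (e i) (e j) = (-1/6 : ℝ) := by
  have := s3
  fin_cases i <;> fin_cases j <;> first | (exact absurd rfl h) | (simp only [e, v, c, Fin.isValue, Fin.zero_eta, Fin.mk_one, Fin.reduceFinMk, Matrix.cons_val_zero, Matrix.cons_val_one, Matrix.cons_val, pt_sub, inner_pt]; nlinarith)

lemma sum_e : e 0 + e 1 + e 2 = 0 := by
  ext k; fin_cases k <;> simp [e, v, c, pt] <;> ring

lemma v_eq (i : Fin 3) : v i = c + e i := by simp [e]

lemma Smap_sub_c (i : Fin 3) (x : E2) : Smap i x - c = (3:ℝ)⁻¹ • (x - c) + (2/3:ℝ) • e i := by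
  rw [Smap_eq, v_eq]; module

lemma Smap_sub_Smap (i : Fin 3) (x y : E2) : Smap i x - Smap i y = (3:ℝ)⁻¹ • (x - y) := by
  rw [Smap_eq, Smap_eq]; module

lemma Tri_eq : Tri = convexHull ℝ (Set.range v) := by
  unfold Tri; congr 1
  ext x; simp [v]; tauto

lemma v_mem (i : Fin 3) : v i ∈ Tri := by rw [Tri_eq]; exact subset_convexHull _ _ ⟨i, rfl⟩

lemma Tri_convex : Convex ℝ Tri := convex_convexHull _ _

lemma Tri_compact : IsCompact Tri := by
  rw [Tri_eq]; exact (Set.finite_range v).isCompact_convexHull ℝ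

lemma Tri_nonempty : Tri.Nonempty := ⟨_, v_mem 0⟩

lemma Tri_sub {s : Set E2} (hs : Convex ℝ s) (h : ∀ i, v i ∈ s) : Tri ⊆ s := by
  rw [Tri_eq]; exact convexHull_min (by rintro _ ⟨i, rfl⟩; exact h i) hs

lemma Smap_mem (i : Fin 3) {x : E2} (hx : x ∈ Tri) : Smap i x ∈ Tri := by
  rw [Smap_eq]
  exact Tri_convex hx (v_mem i) (by norm_num) (by norm_num) (by norm_num)

lemma dist_c_le {x : E2} (hx : x ∈ Tri) : ‖x - c‖ ^ 2 ≤ 1/3 := by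
  have h : Tri ⊆ Metric.closedBall c (Real.sqrt (1/3)) := by
    apply Tri_sub (convex_closedBall _ _)
    intro i
    rw [Metric.mem_closedBall, dist_eq_norm]
    apply Real.le_sqrt_of_sq_le
    rw [← real_inner_self_eq_norm_sq]; exact (inner_e_self i).le
  have := h hx
  rw [Metric.mem_closedBall, dist_eq_norm] at this
  calc ‖x - c‖ ^ 2 ≤ (Real.sqrt (1/3))^2 := by gcongr
    _ = 1/3 := Real.sq_sqrt (by norm_num)

/-- the unit direction from vertex i to vertex j. -/
def u (i j : Fin 3) : E2 := e j - e i

lemma inner_e_u_r {i j : Fin 3} (h : i ≠ j) : inner ℝ (e j) (u i j) = (1/2:ℝ) := by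
  rw [u, inner_sub_right, inner_e_self, inner_e_ne h.symm]; norm_num

lemma inner_e_u_l {i j : Fin 3} (h : i ≠ j) : inner ℝ (e i) (u i j) = (-1/2:ℝ) := by
  rw [u, inner_sub_right, inner_e_self, inner_e_ne h]; norm_num

lemma inner_e_u_o {i j l : Fin 3} (h : l ≠ i) (h' : l ≠ j) : inner ℝ (e l) (u i j) = (0:ℝ) := by
  rw [u, inner_sub_right, inner_e_ne h, inner_e_ne h']; norm_num

lemma norm_u {i j : Fin 3} (h : i ≠ j) : ‖u i j‖ ^ 2 = 1 := by
  rw [← real_inner_self_eq_norm_sq]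
  nth_rewrite 1 [u]
  rw [inner_sub_left, inner_e_u_r h, inner_e_u_l h]; norm_num

lemma norm_u' {i j : Fin 3} (h : i ≠ j) : ‖u i j‖ = 1 := by
  have := norm_u h
  have h0 := norm_nonneg (u i j)
  nlinarith

lemma inner_u_le {i j : Fin 3} (h : i ≠ j) {x : E2} (hx : x ∈ Tri) :
    inner ℝ (x - c) (u i j) ≤ (1/2 : ℝ) ∧ (-1/2 : ℝ) ≤ inner ℝ (x - c) (u i j) := by
  have key : Tri ⊆ {x | inner ℝ (u i j) x ≤ (1/2 : ℝ) + inner ℝ (u i j) c} ∩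
      {x | (-1/2 : ℝ) + inner ℝ (u i j) c ≤ inner ℝ (u i j) x} := by
    apply Tri_sub
    · exact (convex_halfSpace_le (IsLinearMap.mk (fun x y => inner_add_right _ _ _) (fun a x => by simp [inner_smul_right])) _).inter
        (convex_halfSpace_ge (IsLinearMap.mk (fun x y => inner_add_right _ _ _) (fun a x => by simp [inner_smul_right])) _)
    · intro l
      have : inner ℝ (e l) (u i j) ≤ (1/2:ℝ) ∧ (-1/2 : ℝ) ≤ inner ℝ (e l) (u i j) := by
        by_cases hi : l = i
        · rw [hi, inner_e_u_l h]; norm_num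
        by_cases hj : l = j
        · rw [hj, inner_e_u_r h]; norm_num
        · rw [inner_e_u_o hi hj]; norm_num
      rw [real_inner_comm] at this
      simp only [Set.mem_inter_iff, Set.mem_ofPred_eq, v_eq, inner_add_right]
      constructor <;> linarith [this.1, this.2]
  have := key hx
  simp only [Set.mem_inter_iff, Set.mem_ofPred_eq] at this
  rw [real_inner_comm, inner_sub_right]
  constructor <;> linarith [this.1, this.2]

/-- A point whose projection on the direction `u i j` is far is far from all points. -/
lemma far_dist {i j : Fin 3} (h : i ≠ j) {b y : E2} {s t : ℝ}
    (hb : s ≤ inner ℝ (b - c) (u i j)) (hy : inner ℝ (y - c) (u i j) ≤ t) : s - t ≤ ‖y - b‖ := by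
  have h1 := real_inner_le_norm (b - y) (u i j)
  rw [norm_u' h, mul_one] at h1
  have : inner ℝ (b - y) (u i j) = inner ℝ (b - c) (u i j) - (inner ℝ (y - c) (u i j) : ℝ) := by
    rw [← inner_sub_left]; congr 1; module
  rw [norm_sub_rev]; linarith

lemma pair_bd (x y b : E2) : ‖x - y‖^2 / 2 ≤ ‖x - b‖^2 + ‖y - b‖^2 := by
  have h := parallelogram_law_with_norm ℝ (x - b) (y - b)
  have : x - b - (y - b) = x - y := by module
  rw [this] at h
  nlinarith [sq_nonneg ‖x - b + (y - b)‖]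

lemma pair_eq (x y b : E2) : ‖x - b‖^2 + ‖y - b‖^2 = ‖x - y‖^2 / 2 + 2 * ‖(2⁻¹:ℝ) • (x + y) - b‖^2 := by
  have h := parallelogram_law_with_norm ℝ (x - b) (y - b)
  have h1 : x - b - (y - b) = x - y := by module
  have h2 : x - b + (y - b) = (2:ℝ) • ((2⁻¹:ℝ) • (x + y) - b) := by module
  rw [h1, h2, norm_smul, Real.norm_of_nonneg (by norm_num : (0:ℝ) ≤ 2)] at h
  nlinarith

lemma triple_bd (x y z b : E2) : (‖x - y‖^2 + ‖y - z‖^2 + ‖x - z‖^2)/3 ≤ ‖x - b‖^2 + ‖y - b‖^2 + ‖z - b‖^2 := by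
  have h1 : x - y = (x - b) - (y - b) := by module
  have h2 : y - z = (y - b) - (z - b) := by module
  have h3 : x - z = (x - b) - (z - b) := by module
  rw [h1, h2, h3]
  generalize x - b = p; generalize y - b = q; generalize z - b = r
  have h := sq_nonneg ‖p + q + r‖
  rw [← real_inner_self_eq_norm_sq] at h
  simp only [← real_inner_self_eq_norm_sq, inner_sub_left, inner_sub_right, inner_add_left, inner_add_right] at *
  rw [real_inner_comm p q, real_inner_comm p r, real_inner_comm q r] at *
  linarith

lemma Smap_diff (i j : Fin 3) (x : E2) : Smap j x - Smap i x = (2/3:ℝ) • u i j := by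
  rw [Smap_eq, Smap_eq, u, e, e]; module

lemma Smap_diff_norm {i j : Fin 3} (h : i ≠ j) (x : E2) : ‖Smap i x - Smap j x‖^2 = 4/9 := by
  rw [norm_sub_rev, Smap_diff, norm_smul, norm_u' h]; norm_num

lemma third {i j : Fin 3} (h : i ≠ j) : ∃ l, l ≠ i ∧ l ≠ j ∧ ∀ f : Fin 3 → ℝ, f 0 + f 1 + f 2 = f i + f j + f l := by
  fin_cases i <;> fin_cases j <;> first | (exact absurd rfl h) | (refine ⟨0, by decide, by decide, fun f => ?_⟩; simp; ring) | (refine ⟨1, by decide, by decide, fun f => ?_⟩; simp; done) | (refine ⟨1, by decide, by decide, fun f => ?_⟩; simp; ring)| (refine ⟨2, by decide, by decide, fun f => ?_⟩; simp; done) | (refine ⟨2, by decide, by decide, fun f => ?_⟩; simp; ring)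


lemma Smap_cont (i : Fin 3) : Continuous (Smap i) := by
  have : Smap i = fun x => (3:ℝ)⁻¹ • x + (2/3:ℝ) • v i := funext (Smap_eq i)
  rw [this]; fun_prop

lemma RP_eq {P : Measure E2} (hP : P = (3 : ℝ≥0∞)⁻¹ • (P.map S1 + P.map S2 + P.map S3)) :
    P = (3 : ℝ≥0∞)⁻¹ • (P.map (Smap 0) + P.map (Smap 1) + P.map (Smap 2)) := hP

/-- The self-similarity of the measure. -/
def SelfSim (P : Measure E2) : Prop :=
  P = (3 : ℝ≥0∞)⁻¹ • (P.map (Smap 0) + P.map (Smap 1) + P.map (Smap 2))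

lemma infDist_Smap_le (i : Fin 3) (x : E2) : 3 * Metric.infDist (Smap i x) Tri ≤ Metric.infDist x Tri := by
  obtain ⟨y, hy, h⟩ := Tri_compact.exists_infDist_eq_dist Tri_nonempty x
  have := Metric.infDist_le_dist_of_mem (x := Smap i x) (Smap_mem i hy)
  rw [dist_eq_norm, Smap_sub_Smap, norm_smul] at this
  rw [h, dist_eq_norm]
  norm_num at this; linarith

lemma SelfSim.apply {P : Measure E2} (hP : SelfSim P) {s : Set E2} (hs : MeasurableSet s) :
    P s = 3⁻¹ * (P (Smap 0 ⁻¹' s) + P (Smap 1 ⁻¹' s) + P (Smap 2 ⁻¹' s)) := by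
  conv_lhs => rw [hP]
  simp only [Measure.smul_apply, Measure.add_apply, smul_eq_mul]
  rw [Measure.map_apply (Smap_cont 0).measurable hs, Measure.map_apply (Smap_cont 1).measurable hs,
    Measure.map_apply (Smap_cont 2).measurable hs]

lemma SelfSim.ae_mem {P : Measure E2} [IsProbabilityMeasure P] (hP : SelfSim P) : ∀ᵐ x ∂P, x ∈ Tri := by
  have hmeas : ∀ R : ℝ, MeasurableSet {x : E2 | R < Metric.infDist x Tri} := fun R =>
    (isOpen_lt continuous_const (Metric.continuous_infDist_pt Tri)).measurableSet
  have step : ∀ R : ℝ, P {x | R < Metric.infDist x Tri} ≤ P {x | 3 * R < Metric.infDist x Tri} := by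
    intro R
    have hi : ∀ i, P (Smap i ⁻¹' {x | R < Metric.infDist x Tri}) ≤ P {x | 3 * R < Metric.infDist x Tri} := by
      intro i
      apply measure_mono
      intro x hx
      have hx' : R < Metric.infDist (Smap i x) Tri := hx
      show 3 * R < Metric.infDist x Tri
      linarith [infDist_Smap_le i x]
    rw [hP.apply (hmeas R)]
    calc _ ≤ (3:ℝ≥0∞)⁻¹ * (P {x | 3 * R < Metric.infDist x Tri} + P {x | 3 * R < Metric.infDist x Tri} + P {x | 3 * R < Metric.infDist x Tri}) := by
          exact mul_le_mul_right (add_le_add (add_le_add (hi 0) (hi 1)) (hi 2)) _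
      _ = (3:ℝ≥0∞)⁻¹ * 3 * P {x | 3 * R < Metric.infDist x Tri} := by ring
      _ = _ := by rw [ENNReal.inv_mul_cancel (by norm_num) (by norm_num), one_mul]
  have step2 : ∀ (n : ℕ) (R : ℝ), P {x | R < Metric.infDist x Tri} ≤ P {x | 3 ^ n * R < Metric.infDist x Tri} := by
    intro n
    induction n with
    | zero => intro R; simp
    | succ k ih =>
      intro R
      refine (ih R).trans ((step _).trans (le_of_eq ?_))
      congr 1; ext x; simp [pow_succ]; ring_nf
  have hz : ∀ R : ℝ, 0 < R → P {x | R < Metric.infDist x Tri} = 0 := by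
    intro R hR
    have hanti : Antitone fun n : ℕ => {x : E2 | 3 ^ n * R < Metric.infDist x Tri} := by
      intro a b hab x hx
      have hx' : 3 ^ b * R < Metric.infDist x Tri := hx
      show 3 ^ a * R < Metric.infDist x Tri
      refine lt_of_le_of_lt ?_ hx'
      gcongr; norm_num
    have ht := tendsto_measure_iInter_atTop (μ := P) (fun n => (hmeas (3 ^ n * R)).nullMeasurableSet) hanti ⟨0, measure_ne_top _ _⟩
    have hemp : (⋂ n : ℕ, {x : E2 | 3 ^ n * R < Metric.infDist x Tri}) = ∅ := by
      ext x
      simp only [Set.mem_iInter, Set.mem_empty_iff_false, iff_false, not_forall]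
      obtain ⟨n, hn⟩ := pow_unbounded_of_one_lt (Metric.infDist x Tri / R) (by norm_num : (1:ℝ) < 3)
      refine ⟨n, ?_⟩
      rw [div_lt_iff₀ hR] at hn
      simp only [Set.mem_ofPred_eq, not_lt]; exact hn.le
    rw [hemp, measure_empty] at ht
    exact le_antisymm (ge_of_tendsto' ht (fun n => step2 n R)) (zero_le)
  have : ∀ᵐ x ∂P, ∀ n : ℕ, Metric.infDist x Tri ≤ 1 / (n + 1 : ℝ) := by
    rw [ae_all_iff]
    intro n
    rw [ae_iff]
    convert hz (1 / (n + 1 : ℝ)) (by positivity) using 3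
    simp
  filter_upwards [this] with x hx
  rw [Tri_compact.isClosed.mem_iff_infDist_zero Tri_nonempty]
  refine le_antisymm (ge_of_tendsto' (tendsto_one_div_add_atTop_nhds_zero_nat (𝕜 := ℝ)) hx) Metric.infDist_nonneg

lemma SelfSim.integrable {P : Measure E2} [IsProbabilityMeasure P] (hP : SelfSim P) {g : E2 → ℝ} (hg : Continuous g) :
    Integrable g P := by
  have h := hg.continuousOn.integrableOn_compact (μ := P) Tri_compact
  rwa [IntegrableOn, Measure.restrict_eq_self_of_ae_mem hP.ae_mem] at h

lemma SelfSim.integral {P : Measure E2} [IsProbabilityMeasure P] (hP : SelfSim P) {g : E2 → ℝ} (hg : Continuous g) :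
    ∫ x, g x ∂P = (1/3) * (∫ x, g (Smap 0 x) ∂P + ∫ x, g (Smap 1 x) ∂P + ∫ x, g (Smap 2 x) ∂P) := by
  have hi : ∀ i, Integrable g (P.map (Smap i)) := by
    intro i
    rw [integrable_map_measure hg.aestronglyMeasurable (Smap_cont i).measurable.aemeasurable]
    exact hP.integrable (hg.comp (Smap_cont i))
  conv_lhs => rw [hP]
  rw [integral_smul_measure, integral_add_measure ((hi 0).add_measure (hi 1)) (hi 2), integral_add_measure (hi 0) (hi 1)]
  rw [integral_map (Smap_cont 0).measurable.aemeasurable hg.aestronglyMeasurable,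
    integral_map (Smap_cont 1).measurable.aemeasurable hg.aestronglyMeasurable,
    integral_map (Smap_cont 2).measurable.aemeasurable hg.aestronglyMeasurable]
  simp

/-- monotonicity of integral for continuous functions comparing on the triangle -/
lemma SelfSim.mono {P : Measure E2} [IsProbabilityMeasure P] (hP : SelfSim P) {f g : E2 → ℝ} (hf : Continuous f)
    (hg : Continuous g) (h : ∀ x ∈ Tri, f x ≤ g x) : ∫ x, f x ∂P ≤ ∫ x, g x ∂P := by
  apply integral_mono_ae (hP.integrable hf) (hP.integrable hg)
  filter_upwards [hP.ae_mem] with x hx using h x hx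

lemma SelfSim.const_le {P : Measure E2} [IsProbabilityMeasure P] (hP : SelfSim P) {g : E2 → ℝ} (r : ℝ)
    (hg : Continuous g) (h : ∀ x ∈ Tri, r ≤ g x) : r ≤ ∫ x, g x ∂P := by
  have := hP.mono (continuous_const (y := r)) hg h
  simpa using this

lemma SelfSim.mean {P : Measure E2} [IsProbabilityMeasure P] (hP : SelfSim P) (w : E2) :
    ∫ x, inner ℝ (x - c) w ∂P = (0:ℝ) := by
  have hc : Continuous fun x : E2 => (inner ℝ (x - c) w : ℝ) := by fun_prop
  have h := hP.integral hc
  have hi : ∀ i, ∫ x, inner ℝ (Smap i x - c) w ∂P = 3⁻¹ * ∫ x, inner ℝ (x - c) w ∂P + (2/3) * (inner ℝ (e i) w : ℝ) := by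
    intro i
    simp only [Smap_sub_c, inner_add_left, real_inner_smul_left]
    rw [integral_add ((hP.integrable hc).const_mul _) (integrable_const _), integral_const_mul]
    simp
  rw [hi, hi, hi] at h
  have hs : (inner ℝ (e 0) w : ℝ) + inner ℝ (e 1) w + inner ℝ (e 2) w = 0 := by
    rw [← inner_add_left, ← inner_add_left, sum_e, inner_zero_left]
  linarith

lemma SelfSim.secondMoment {P : Measure E2} [IsProbabilityMeasure P] (hP : SelfSim P) :
    ∫ x, ‖x - c‖^2 ∂P = (1/6:ℝ) := by
  have hc : Continuous fun x : E2 => ‖x - c‖^2 := by fun_prop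
  have h := hP.integral hc
  have hi : ∀ i, ∫ x, ‖Smap i x - c‖^2 ∂P = 9⁻¹ * ∫ x, ‖x - c‖^2 ∂P + 4/27 := by
    intro i
    have : ∀ x, ‖Smap i x - c‖^2 = 9⁻¹ * ‖x - c‖^2 + ((4/9) * inner ℝ (x - c) (e i) + 4/27) := by
      intro x
      rw [Smap_sub_c, norm_add_sq_real, norm_smul, norm_smul, real_inner_smul_left, real_inner_smul_right, mul_pow, mul_pow, ← real_inner_self_eq_norm_sq (e i), inner_e_self]
      norm_num; ring
    simp only [this]
    rw [integral_add ((hP.integrable hc).const_mul _) (hP.integrable (by fun_prop)),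
      integral_add (hP.integrable (by fun_prop)) (integrable_const _), integral_const_mul, integral_const_mul, hP.mean]
    simp
  rw [hi, hi, hi] at h
  linarith

lemma SelfSim.moment {P : Measure E2} [IsProbabilityMeasure P] (hP : SelfSim P) (b : E2) :
    ∫ x, ‖x - b‖^2 ∂P = 1/6 + ‖c - b‖^2 := by
  have : ∀ x, ‖x - b‖^2 = ‖x - c‖^2 + (2 * inner ℝ (x - c) (c - b) + ‖c - b‖^2) := by
    intro x
    have : x - b = (x - c) + (c - b) := by module
    rw [this, norm_add_sq_real]; ring
  rw [integral_congr_ae (Filter.Eventually.of_forall this)]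
  rw [integral_add (hP.integrable (by fun_prop)) (hP.integrable (by fun_prop)),
      integral_add (hP.integrable (by fun_prop)) (integrable_const _), integral_const_mul, hP.mean, hP.secondMoment]
  simp

lemma SelfSim.moment_S {P : Measure E2} [IsProbabilityMeasure P] (hP : SelfSim P) (i : Fin 3) (b : E2) :
    ∫ x, ‖Smap i x - Smap i b‖^2 ∂P = 1/54 + ‖c - b‖^2 / 9 := by
  simp only [Smap_sub_Smap, norm_smul, mul_pow]
  rw [integral_const_mul, hP.moment]
  norm_num; ring


/-- squared distance to a set -/
def d2 (A : Set E2) (x : E2) : ℝ := (Metric.infDist x A) ^ 2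

/-- real-valued distortion -/
def ee (P : Measure E2) (A : Set E2) : ℝ := ∫ x, d2 A x ∂P

lemma d2_cont (A : Set E2) : Continuous (d2 A) := (Metric.continuous_infDist_pt A).pow 2

lemma d2_nonneg (A : Set E2) (x : E2) : 0 ≤ d2 A x := sq_nonneg _

lemma ee_nonneg (P : Measure E2) (A : Set E2) : 0 ≤ ee P A := integral_nonneg (d2_nonneg A)

lemma d2_le {A : Set E2} {a : E2} (ha : a ∈ A) (x : E2) : d2 A x ≤ ‖x - a‖ ^ 2 := by
  have := Metric.infDist_le_dist_of_mem (x := x) ha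
  rw [dist_eq_norm] at this
  exact pow_le_pow_left₀ Metric.infDist_nonneg this 2

lemma d2_serve {A : Set E2} (hf : A.Finite) (hn : A.Nonempty) (x : E2) : ∃ a ∈ A, d2 A x = ‖x - a‖ ^ 2 := by
  obtain ⟨a, ha, h⟩ := hf.isCompact.exists_infDist_eq_dist hn x
  exact ⟨a, ha, by rw [d2, h, dist_eq_norm]⟩

lemma triple_core {K : Set E2} (hK : K.Finite) {x y z a b d : E2} {q : ℝ} (hq : q ≤ 2/9)
    (hxy : ‖x - y‖^2 = 4/9) (hyz : ‖y - z‖^2 = 4/9) (hxz : ‖x - z‖^2 = 4/9)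
    (ha : a ∉ K → q ≤ ‖x - a‖^2) (hb : b ∉ K → 2/9 ≤ ‖y - b‖^2) (hd : d ∉ K → 2/9 ≤ ‖z - d‖^2) :
    (3 - K.ncard : ℝ) * (2/9) - (2/9 - q) ≤ ‖x - a‖^2 + ‖y - b‖^2 + ‖z - d‖^2 := by
  have ra := sq_nonneg ‖x - a‖
  have rb := sq_nonneg ‖y - b‖
  have rd := sq_nonneg ‖z - d‖
  have hk0 : (0:ℝ) ≤ K.ncard := by positivity
  have k1 : ∀ p ∈ K, (1:ℝ) ≤ K.ncard := by
    intro p hp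
    have := (Set.ncard_pos hK).2 ⟨p, hp⟩
    exact_mod_cast this
  have k2 : ∀ p ∈ K, ∀ r ∈ K, p ≠ r → (2:ℝ) ≤ K.ncard := by
    intro p hp r hr hpr
    have := (Set.one_lt_ncard_iff hK).2 ⟨p, r, hp, hr, hpr⟩
    exact_mod_cast this
  have k3 : ∀ p ∈ K, ∀ r ∈ K, ∀ s ∈ K, p ≠ r → p ≠ s → r ≠ s → (3:ℝ) ≤ K.ncard := by
    intro p hp r hr s hs h1 h2 h3
    have := (Set.two_lt_ncard_iff hK).2 ⟨p, r, s, hp, hr, hs, h1, h2, h3⟩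
    exact_mod_cast this
  have pab : a = b → 2/9 ≤ ‖x - a‖^2 + ‖y - b‖^2 := by
    rintro rfl; have := pair_bd x y a; linarith
  have pbd : b = d → 2/9 ≤ ‖y - b‖^2 + ‖z - d‖^2 := by
    rintro rfl; have := pair_bd y z b; linarith
  have pad : a = d → 2/9 ≤ ‖x - a‖^2 + ‖z - d‖^2 := by
    rintro rfl; have := pair_bd x z a; linarith
  have pabd : a = b → b = d → 4/9 ≤ ‖x - a‖^2 + ‖y - b‖^2 + ‖z - d‖^2 := by
    rintro rfl rfl; have := triple_bd x y z a; linarith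
  by_cases hA : a ∈ K <;> by_cases hB : b ∈ K <;> by_cases hD : d ∈ K
  · by_cases h1 : a = b
    · by_cases h2 : b = d
      · linarith [pabd h1 h2, k1 a hA]
      · linarith [pab h1, k2 b hB d hD h2]
    · by_cases h2 : b = d
      · linarith [pbd h2, k2 a hA b hB h1]
      · by_cases h3 : a = d
        · linarith [pad h3, k2 a hA b hB h1]
        · linarith [k3 a hA b hB d hD h1 h3 h2]
  · have := hd hD
    by_cases h1 : a = b
    · linarith [pab h1, k1 a hA]
    · linarith [k2 a hA b hB h1]
  · have := hb hB
    by_cases h1 : a = d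
    · linarith [pad h1, k1 a hA]
    · linarith [k2 a hA d hD h1]
  · linarith [hb hB, hd hD, k1 a hA]
  · have := ha hA
    by_cases h1 : b = d
    · linarith [pbd h1, k1 b hB]
    · linarith [k2 b hB d hD h1]
  · linarith [ha hA, hd hD, k1 b hB]
  · linarith [ha hA, hb hB, k1 d hD]
  · linarith [ha hA, hb hB, hd hD]

lemma triple_cost {A K : Set E2} (hA : A.Finite) (hAn : A.Nonempty) (hK : K.Finite) {i j : Fin 3} (hij : i ≠ j)
    {q : ℝ} (hq : q ≤ 2/9) (x : E2)
    (h : ∀ b ∈ A, b ∉ K → (∀ m, m ≠ j → 2/9 ≤ ‖Smap m x - b‖^2) ∧ q ≤ ‖Smap j x - b‖^2) :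
    (3 - K.ncard : ℝ) * (2/9) - (2/9 - q) ≤ d2 A (Smap 0 x) + d2 A (Smap 1 x) + d2 A (Smap 2 x) := by
  obtain ⟨l, hli, hlj, hs⟩ := third hij
  rw [hs (fun m => d2 A (Smap m x))]
  obtain ⟨a, ha, ha'⟩ := d2_serve hA hAn (Smap j x)
  obtain ⟨b, hb, hb'⟩ := d2_serve hA hAn (Smap i x)
  obtain ⟨d, hd, hd'⟩ := d2_serve hA hAn (Smap l x)
  have := triple_core hK hq (Smap_diff_norm hij.symm x) (Smap_diff_norm hli.symm x) (Smap_diff_norm hlj.symm x)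
    (a := a) (b := b) (d := d) (fun hk => (h a ha hk).2) (fun hk => (h b hb hk).1 i hij) (fun hk => (h d hd hk).1 l hlj)
  simp only [ha', hb', hd']
  linarith

lemma ee_eq {P : Measure E2} [IsProbabilityMeasure P] (hP : SelfSim P) (A : Set E2) :
    ee P A = (1/3) * ∫ x, (d2 A (Smap 0 x) + d2 A (Smap 1 x) + d2 A (Smap 2 x)) ∂P := by
  have h : ∀ m, Integrable (fun x => d2 A (Smap m x)) P := fun m => hP.integrable ((d2_cont A).comp (Smap_cont m))
  have h3 := integral_add (μ := P) (f := fun x => d2 A (Smap 0 x) + d2 A (Smap 1 x)) (g := fun x => d2 A (Smap 2 x))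
    ((h 0).add (h 1)) (h 2)
  rw [h3, integral_add (h 0) (h 1)]
  exact hP.integral (d2_cont A)

lemma sum_cont (A : Set E2) : Continuous fun x => d2 A (Smap 0 x) + d2 A (Smap 1 x) + d2 A (Smap 2 x) :=
  (((d2_cont A).comp (Smap_cont 0)).add ((d2_cont A).comp (Smap_cont 1))).add ((d2_cont A).comp (Smap_cont 2))

/-- `b` is foreign for the triangle with index `i`, at distance at least `D`. -/
def Foreign (i : Fin 3) (D : ℝ) (b : E2) : Prop := ∃ j, i ≠ j ∧ 1/2 + D ≤ inner ℝ (b - c) (u i j)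

lemma Foreign.dist {i : Fin 3} {D : ℝ} {b y : E2} (h : Foreign i D b) (hy : y ∈ Tri) : D ≤ ‖y - b‖ := by
  obtain ⟨j, hij, hb⟩ := h
  have := far_dist hij hb (inner_u_le hij hy).1
  linarith

lemma Foreign.dist_sq {i : Fin 3} {D : ℝ} (hD : 0 ≤ D) {b y : E2} (h : Foreign i D b) (hy : y ∈ Tri) : D^2 ≤ ‖y - b‖^2 :=
  pow_le_pow_left₀ hD (h.dist hy) 2

lemma lower_F {P : Measure E2} [IsProbabilityMeasure P] (hP : SelfSim P) {A K : Set E2} (hA : A.Finite) (hAn : A.Nonempty)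
    (hK : K.Finite) (i : Fin 3) (h : ∀ b ∈ A, b ∉ K → Foreign i (1/2) b) :
    12 * (3 - K.ncard : ℝ) ≤ 162 * ee P A := by
  rw [ee_eq hP]
  have := hP.const_le ((3 - K.ncard : ℝ) * (2/9)) (sum_cont A) (by
    intro x hx
    have h2 := triple_cost hA hAn hK (i := 0) (j := 1) (by decide) (le_refl (2/9:ℝ)) x (by
      intro b hb hbK
      have hm : ∀ m, 2/9 ≤ ‖Smap m x - b‖^2 := by
        intro m
        have := (h b hb hbK).dist_sq (by norm_num) (Smap_mem m hx)
        linarith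
      exact ⟨fun m _ => hm m, hm 1⟩)
    linarith)
  linarith

lemma inner_Smap (m : Fin 3) (x w : E2) : inner ℝ (Smap m x - c) w = (1/3) * inner ℝ (x - c) w + (2/3) * (inner ℝ (e m) w : ℝ) := by
  rw [Smap_sub_c, inner_add_left, real_inner_smul_left, real_inner_smul_left]; ring

lemma lower_F0 {P : Measure E2} [IsProbabilityMeasure P] (hP : SelfSim P) {A : Set E2} (hA : A.Finite) (hAn : A.Nonempty)
    (i : Fin 3) (h : ∀ b ∈ A, Foreign i (1/2) b) : 81 < 162 * ee P A := by
  rw [ee_eq hP]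
  have := hP.const_le (49/36 + 1/4 + 1/4) (sum_cont A) (by
    intro x hx
    obtain ⟨j, hij⟩ : ∃ j, i ≠ j := ⟨i + 1, by fin_cases i <;> decide⟩
    obtain ⟨l, hli, hlj, hs⟩ := third hij
    rw [hs (fun m => d2 A (Smap m x))]
    have h4 : ∀ m, 1/4 ≤ d2 A (Smap m x) := by
      intro m
      obtain ⟨b, hb, hb'⟩ := d2_serve hA hAn (Smap m x)
      rw [hb']
      have := (h b hb).dist_sq (by norm_num) (Smap_mem m hx)
      linarith
    have h5 : 49/36 ≤ d2 A (Smap i x) := by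
      obtain ⟨b, hb, hb'⟩ := d2_serve hA hAn (Smap i x)
      rw [hb']
      obtain ⟨k, hik, hk⟩ := h b hb
      have h6 : inner ℝ (Smap i x - c) (u i k) ≤ (-1/6 : ℝ) := by
        rw [inner_Smap, inner_e_u_l hik]; linarith [(inner_u_le hik hx).1]
      have := far_dist hik hk h6
      nlinarith
    linarith [h4 j, h4 l])
  linarith

lemma lower_lost {P : Measure E2} [IsProbabilityMeasure P] (hP : SelfSim P) {A K : Set E2} (hA : A.Finite) (hAn : A.Nonempty)
    (hK : K.Finite) (i : Fin 3) (h : ∀ b ∈ A, b ∉ K → Foreign i (1/2) b) {b₀ : E2} (hb₀ : b₀ ∈ K)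
    (hl : Foreign i (53/200) b₀) :
    12 * (3 - K.ncard : ℝ) + 9 < 162 * ee P A := by
  obtain ⟨j, hij, hj⟩ := hl
  obtain ⟨l, hli, hlj, hs⟩ := third hij
  have hK' : (K \ {b₀}).Finite := hK.subset Set.sdiff_subset
  have hcard : ((K \ {b₀}).ncard : ℝ) = K.ncard - 1 := by
    have := Set.ncard_sdiff_singleton_add_one hb₀ hK
    rw [← this]; push_cast; ring
  let s : E2 → ℝ := fun y => 53/200 + 1/2 - inner ℝ (y - c) (u i j)
  let q : E2 → ℝ := fun y => min (2/9) ((s y)^2)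
  have hsc : Continuous s := by unfold s; fun_prop
  have hqc : Continuous q := continuous_const.min (hsc.pow 2)
  have hmain : ∀ x ∈ Tri, (3 - (K.ncard - 1) : ℝ) * (2/9) - (2/9 - q (Smap j x)) ≤
      d2 A (Smap 0 x) + d2 A (Smap 1 x) + d2 A (Smap 2 x) := by
    intro x hx
    rw [← hcard]
    apply triple_cost hA hAn hK' hij (min_le_left _ _) x
    intro b hb hbK
    by_cases hbb : b = b₀
    · subst hbb
      constructor
      · intro m hm
        have h6 : inner ℝ (Smap m x - c) (u i j) ≤ (1/6 : ℝ) := by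
          rw [inner_Smap]
          have : inner ℝ (e m) (u i j) ≤ (0:ℝ) := by
            by_cases hmi : m = i
            · rw [hmi, inner_e_u_l hij]; norm_num
            · rw [inner_e_u_o hmi hm]
          linarith [(inner_u_le hij hx).1]
        have := far_dist hij hj h6
        nlinarith
      · refine (min_le_right _ _).trans ?_
        have := far_dist hij hj (le_refl (inner ℝ (Smap j x - c) (u i j)))
        refine pow_le_pow_left₀ ?_ (by unfold s; linarith) 2
        unfold s; linarith [(inner_u_le hij (Smap_mem j hx)).1]
    · have hbK2 : b ∉ K := fun hk => hbK ⟨hk, hbb⟩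
      have hm : ∀ m, 2/9 ≤ ‖Smap m x - b‖^2 := by
        intro m
        have := (h b hb hbK2).dist_sq (by norm_num) (Smap_mem m hx)
        linarith
      exact ⟨fun m _ => hm m, (min_le_left _ _).trans (hm j)⟩
  have hqj : Continuous fun x => q (Smap j x) := hqc.comp (Smap_cont j)
  have h1 := hP.mono (f := fun x => (3 - (K.ncard - 1) : ℝ) * (2/9) - (2/9 - q (Smap j x)))
    (continuous_const.sub (continuous_const.sub hqj)) (sum_cont A) hmain
  have hint : Continuous fun x => 2/9 - q (Smap j x) := continuous_const.sub hqj
  rw [integral_sub (integrable_const _) (hP.integrable hint),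
    integral_sub (integrable_const _) (hP.integrable hqj)] at h1
  simp only [integral_const, probReal_univ, one_smul] at h1
  have h2 := hP.integral hqj
  rw [hs (fun m => ∫ x, q (Smap j (Smap m x)) ∂P)] at h2
  have hss : ∀ m x, s (Smap j (Smap m x)) = 53/200 + 1/6 - (2/9) * inner ℝ (e m) (u i j) - (1/9) * inner ℝ (x - c) (u i j) := by
    intro m x
    unfold s
    rw [inner_Smap, inner_Smap, inner_e_u_r hij]; ring
  have hlin : ∀ (p r : ℝ), ∫ x, (p - r * inner ℝ (x - c) (u i j)) ∂P = p := by
    intro p r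
    rw [integral_sub (integrable_const _) (hP.integrable (by fun_prop)), integral_const_mul, hP.mean]
    simp
  have hcm : ∀ m, Continuous fun x => q (Smap j (Smap m x)) := fun m => hqj.comp (Smap_cont m)
  have hi' : 2/9 ≤ ∫ x, q (Smap j (Smap i x)) ∂P := by
    apply hP.const_le _ (hcm i)
    intro x hx
    apply le_min le_rfl
    rw [hss, inner_e_u_l hij]
    have := (inner_u_le hij hx).1
    nlinarith
  have hj' : 16/25 * (53/200 + 1/18) - 64/625 ≤ ∫ x, q (Smap j (Smap j x)) ∂P := by
    rw [← hlin (16/25 * (53/200 + 1/18) - 64/625) (16/25 * (1/9))]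
    apply hP.mono (by fun_prop) (hcm j)
    intro x hx
    have := inner_u_le hij hx
    apply le_min
    · linarith [this.2]
    · rw [hss, inner_e_u_r hij]
      nlinarith [sq_nonneg (53/200 + 1/18 - (1/9) * inner ℝ (x - c) (u i j) - 8/25 : ℝ)]
  have hl' : 18/25 * (53/200 + 1/6) - 81/625 ≤ ∫ x, q (Smap j (Smap l x)) ∂P := by
    rw [← hlin (18/25 * (53/200 + 1/6) - 81/625) (18/25 * (1/9))]
    apply hP.mono (by fun_prop) (hcm l)
    intro x hx
    have := inner_u_le hij hx
    apply le_min
    · linarith [this.2]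
    · rw [hss, inner_e_u_o hli hlj]
      nlinarith [sq_nonneg (53/200 + 1/6 - (1/9) * inner ℝ (x - c) (u i j) - 9/25 : ℝ)]
  rw [ee_eq hP]
  linarith



lemma hole_int {P : Measure E2} [IsProbabilityMeasure P] (hP : SelfSim P) {A : Set E2} (hA : A.Finite) (hAn : A.Nonempty)
    {h : Fin 3} {y : E2} (hy : y ∈ Tri) {r : ℝ} (hr : r ≤ d2 A (Smap h y)) :
    r / 2 - 1/18 ≤ ∫ x, d2 A (Smap h x) ∂P ∧ (2/3) * r - 1/9 ≤ ∫ x, d2 A (Smap h x) ∂P := by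
  have hc : Continuous fun x => ‖Smap h x - Smap h y‖^2 := ((Smap_cont h).sub continuous_const).norm.pow 2
  have hd : Continuous fun x => d2 A (Smap h x) := (d2_cont A).comp (Smap_cont h)
  have hm := hP.moment_S h y
  have hy' := dist_c_le hy
  rw [← norm_neg, neg_sub] at hy'
  have key : ∀ x, ∃ p q : ℝ, d2 A (Smap h x) = p^2 ∧ ‖Smap h x - Smap h y‖ = q ∧ 0 ≤ p ∧ 0 ≤ q ∧ r ≤ (p + q)^2 := by
    intro x
    obtain ⟨a, ha, ha'⟩ := d2_serve hA hAn (Smap h x)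
    refine ⟨_, _, ha', rfl, norm_nonneg _, norm_nonneg _, ?_⟩
    refine hr.trans ((d2_le ha _).trans ?_)
    apply pow_le_pow_left₀ (norm_nonneg _)
    have := norm_sub_le (Smap h x - a) (Smap h x - Smap h y)
    have h9 : Smap h x - a - (Smap h x - Smap h y) = Smap h y - a := by abel
    rwa [h9] at this
  constructor
  · have h1 := hP.mono (f := fun x => r/2 - ‖Smap h x - Smap h y‖^2) (continuous_const.sub hc) hd (by
      intro x _
      obtain ⟨p, q, e1, e2, hp, hq, hpq⟩ := key x
      simp only [e1, e2]
      nlinarith [sq_nonneg (p - q)])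
    rw [integral_sub (integrable_const _) (hP.integrable hc)] at h1
    simp only [integral_const, probReal_univ, one_smul] at h1
    linarith
  · have h1 := hP.mono (f := fun x => (2/3)*r - 2 * ‖Smap h x - Smap h y‖^2) (continuous_const.sub (continuous_const.mul hc)) hd (by
      intro x _
      obtain ⟨p, q, e1, e2, hp, hq, hpq⟩ := key x
      simp only [e1, e2]
      nlinarith [sq_nonneg (p - 2 * q)])
    have hc2 : Continuous fun x => 2 * ‖Smap h x - Smap h y‖^2 := continuous_const.mul hc
    rw [integral_sub (integrable_const _) (hP.integrable hc2), integral_const_mul 2 (fun x => ‖Smap h x - Smap h y‖^2)] at h1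
    simp only [integral_const, probReal_univ, one_smul] at h1
    linarith

lemma ee_eq' {P : Measure E2} [IsProbabilityMeasure P] (hP : SelfSim P) (A : Set E2) (h : Fin 3) : ∃ p q, p ≠ q ∧
    ee P A = (1/3) * (∫ x, d2 A (Smap h x) ∂P + ∫ x, d2 A (Smap p x) ∂P + ∫ x, d2 A (Smap q x) ∂P) := by
  obtain ⟨j, hij⟩ : ∃ j, h ≠ j := ⟨h + 1, by fin_cases h <;> decide⟩
  obtain ⟨l, hli, hlj, hs⟩ := third hij
  refine ⟨j, l, hlj.symm, ?_⟩
  rw [← hs (fun m => ∫ x, d2 A (Smap m x) ∂P)]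
  exact hP.integral (d2_cont A)

lemma hole_half {P : Measure E2} [IsProbabilityMeasure P] (hP : SelfSim P) {A : Set E2} (hA : A.Finite) (hAn : A.Nonempty)
    {h : Fin 3} {y : E2} (hy : y ∈ Tri) (hr : 1/4 ≤ d2 A (Smap h y)) : 3 < 162 * ee P A := by
  obtain ⟨p, q, -, hpq⟩ := ee_eq' hP A h
  have h1 := (hole_int hP hA hAn hy hr).1
  have h2 := integral_nonneg (μ := P) (f := fun x => d2 A (Smap p x)) (fun x => d2_nonneg _ _)
  have h3 := integral_nonneg (μ := P) (f := fun x => d2 A (Smap q x)) (fun x => d2_nonneg _ _)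
  rw [hpq]; linarith

lemma six_diff {p q : Fin 3} (hpq : p ≠ q) (l m : Fin 3) (x : E2) : 16/81 ≤ ‖Smap p (Smap l x) - Smap q (Smap m x)‖^2 := by
  have h0 : ‖Smap m x - Smap l x‖ ≤ 2/3 := by
    by_cases hml : m = l
    · subst hml; rw [sub_self, norm_zero]; norm_num
    · have := Smap_diff_norm hml x
      nlinarith [norm_nonneg (Smap m x - Smap l x)]
  have h1 : Smap q (Smap m x) - Smap p (Smap l x) = (3:ℝ)⁻¹ • (Smap m x - Smap l x) + (2/3:ℝ) • u p q := by
    rw [← Smap_diff p q (Smap l x), ← sub_add_sub_cancel (b := Smap q (Smap l x)), Smap_sub_Smap, Smap_diff]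
  rw [← norm_neg, neg_sub, h1]
  have h2 : ‖(2/3:ℝ) • u p q‖ = 2/3 := by
    rw [norm_smul, norm_u' hpq, mul_one]; norm_num
  have h3 : ‖(3:ℝ)⁻¹ • (Smap m x - Smap l x)‖ ≤ 2/9 := by
    rw [norm_smul, Real.norm_of_nonneg (by norm_num)]; linarith
  have h4 := norm_sub_norm_le ((2/3:ℝ) • u p q) (-((3:ℝ)⁻¹ • (Smap m x - Smap l x)))
  rw [norm_neg, sub_neg_eq_add, h2, add_comm ((2/3:ℝ) • u p q)] at h4
  have h5 : 4/9 ≤ ‖(3:ℝ)⁻¹ • (Smap m x - Smap l x) + (2/3:ℝ) • u p q‖ := by linarith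
  nlinarith

lemma small_diff (p : Fin 3) {l m : Fin 3} (h : l ≠ m) (x : E2) : ‖Smap p (Smap l x) - Smap p (Smap m x)‖^2 = 4/81 := by
  rw [Smap_sub_Smap, norm_smul, mul_pow, Smap_diff_norm h, Real.norm_of_nonneg (by norm_num)]; norm_num

lemma six_one {A K : Set E2} (hA : A.Finite) (hAn : A.Nonempty) {b : E2} (hK : ∀ a ∈ K, a = b) {p q : Fin 3} (hpq : p ≠ q)
    {x : E2} (hx : x ∈ Tri) (hF : ∀ a ∈ A, a ∉ K → ∀ y ∈ Tri, (147/200)^2 ≤ ‖y - a‖^2) :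
    62/81 ≤ (d2 A (Smap p (Smap 0 x)) + d2 A (Smap q (Smap 0 x))) + (d2 A (Smap p (Smap 1 x)) + d2 A (Smap q (Smap 1 x)))
      + (d2 A (Smap p (Smap 2 x)) + d2 A (Smap q (Smap 2 x))) := by
  have key : ∀ l, (d2 A (Smap p (Smap l x)) + d2 A (Smap q (Smap l x)) =
        2/9 + 2 * ‖(2⁻¹:ℝ) • (Smap p (Smap l x) + Smap q (Smap l x)) - b‖^2) ∨
      (147/200)^2 ≤ d2 A (Smap p (Smap l x)) + d2 A (Smap q (Smap l x)) := by
    intro l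
    obtain ⟨a, ha, ha'⟩ := d2_serve hA hAn (Smap p (Smap l x))
    obtain ⟨a', haa, haa'⟩ := d2_serve hA hAn (Smap q (Smap l x))
    have n1 := d2_nonneg A (Smap p (Smap l x))
    have n2 := d2_nonneg A (Smap q (Smap l x))
    by_cases h1 : a ∈ K
    · by_cases h2 : a' ∈ K
      · left
        rw [ha', haa', hK a h1, hK a' h2, pair_eq, Smap_diff_norm hpq]; norm_num
      · right
        have := hF a' haa h2 _ (Smap_mem q (Smap_mem l hx))
        linarith
    · right
      have := hF a ha h1 _ (Smap_mem p (Smap_mem l hx))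
      linarith
  have key2 : ∀ l, 2/9 ≤ d2 A (Smap p (Smap l x)) + d2 A (Smap q (Smap l x)) := by
    intro l
    rcases key l with h | h
    · rw [h]; nlinarith [sq_nonneg ‖(2⁻¹:ℝ) • (Smap p (Smap l x) + Smap q (Smap l x)) - b‖]
    · linarith
  have md : ∀ l m, l ≠ m → ‖(2⁻¹:ℝ) • (Smap p (Smap l x) + Smap q (Smap l x)) - (2⁻¹:ℝ) • (Smap p (Smap m x) + Smap q (Smap m x))‖^2 = 4/81 := by
    intro l m hlm
    have : (2⁻¹:ℝ) • (Smap p (Smap l x) + Smap q (Smap l x)) - (2⁻¹:ℝ) • (Smap p (Smap m x) + Smap q (Smap m x)) =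
      Smap p (Smap l x) - Smap p (Smap m x) := by
      simp only [Smap_eq p, Smap_eq q]; module
    rw [this, small_diff p hlm]
  rcases key 0 with h0 | h0
  · rcases key 1 with h1 | h1
    · rcases key 2 with h2 | h2
      · rw [h0, h1, h2]
        have := triple_bd ((2⁻¹:ℝ) • (Smap p (Smap 0 x) + Smap q (Smap 0 x))) ((2⁻¹:ℝ) • (Smap p (Smap 1 x) + Smap q (Smap 1 x)))
          ((2⁻¹:ℝ) • (Smap p (Smap 2 x) + Smap q (Smap 2 x))) b
        rw [md 0 1 (by decide), md 1 2 (by decide), md 0 2 (by decide)] at this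
        linarith
      · linarith [key2 0, key2 1]
    · linarith [key2 0, key2 2]
  · linarith [key2 1, key2 2]

lemma six_two {A K : Set E2} (hA : A.Finite) (hAn : A.Nonempty) (hKf : K.Finite) (hK : K.ncard ≤ 2) {p q : Fin 3} (hpq : p ≠ q)
    {x : E2} (hx : x ∈ Tri) (hF : ∀ a ∈ A, a ∉ K → ∀ y ∈ Tri, (147/200)^2 ≤ ‖y - a‖^2) :
    8/81 ≤ (d2 A (Smap p (Smap 0 x)) + d2 A (Smap q (Smap 0 x))) + (d2 A (Smap p (Smap 1 x)) + d2 A (Smap q (Smap 1 x)))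
      + (d2 A (Smap p (Smap 2 x)) + d2 A (Smap q (Smap 2 x))) := by
  have hsp : ∀ l, ∃ a ∈ A, d2 A (Smap p (Smap l x)) = ‖Smap p (Smap l x) - a‖^2 := fun l => d2_serve hA hAn _
  have hsq : ∀ l, ∃ a ∈ A, d2 A (Smap q (Smap l x)) = ‖Smap q (Smap l x) - a‖^2 := fun l => d2_serve hA hAn _
  choose s hsA hs using hsp
  choose t htA ht using hsq
  have np := fun l => d2_nonneg A (Smap p (Smap l x))
  have nq := fun l => d2_nonneg A (Smap q (Smap l x))
  have split : ∀ f : Fin 3 → ℝ, (∀ l, 0 ≤ f l) → ∀ l, f l ≤ f 0 + f 1 + f 2 := by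
    intro f hf l
    have := hf 0; have := hf 1; have := hf 2
    fin_cases l <;> simp <;> linarith
  have hp := split _ np
  have hq := split _ nq
  by_cases hS : ∀ l, s l ∈ K
  · by_cases hT : ∀ l, t l ∈ K
    · by_cases hE : ∃ l m, s l = t m
      · obtain ⟨l, m, hlm⟩ := hE
        have h1 := pair_bd (Smap p (Smap l x)) (Smap q (Smap m x)) (s l)
        have h2 := six_diff hpq l m x
        have h3 := hs l
        have h4 := ht m
        rw [← hlm] at h4
        linarith [hp l, hq m]
      · push Not at hE
        have two : ∀ {a b d : E2}, a ∈ K → b ∈ K → d ∈ K → a ≠ d → b ≠ d → a = b := by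
          intro a b d ha hb hd h1 h2
          by_contra hab
          have := (Set.two_lt_ncard_iff hKf).2 ⟨a, b, d, ha, hb, hd, hab, h1, h2⟩
          omega
        have e1 : ∀ l, s l = s 0 := fun l => two (hS l) (hS 0) (hT 0) (hE _ _) (hE _ _)
        have e2 : ∀ l, t l = t 0 := fun l => two (hT l) (hT 0) (hS 0) (hE _ _).symm (hE _ _).symm
        have b1 := triple_bd (Smap p (Smap 0 x)) (Smap p (Smap 1 x)) (Smap p (Smap 2 x)) (s 0)
        have b2 := triple_bd (Smap q (Smap 0 x)) (Smap q (Smap 1 x)) (Smap q (Smap 2 x)) (t 0)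
        rw [small_diff _ (by decide), small_diff _ (by decide), small_diff _ (by decide)] at b1 b2
        rw [hs 0, hs 1, hs 2, ht 0, ht 1, ht 2, e1 1, e1 2, e2 1, e2 2]
        linarith
    · push Not at hT
      obtain ⟨l, hl⟩ := hT
      have h1 := hF (t l) (htA l) hl _ (Smap_mem q (Smap_mem l hx))
      rw [← ht l] at h1
      linarith [hq l, np 0, np 1, np 2]
  · push Not at hS
    obtain ⟨l, hl⟩ := hS
    have h1 := hF (s l) (hsA l) hl _ (Smap_mem p (Smap_mem l hx))
    rw [← hs l] at h1
    linarith [hp l, nq 0, nq 1, nq 2]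

/-- upper bounds for the quantization errors -/
def vb (k : ℕ) : ℝ := if k ≤ 1 then 27/162 else if k = 2 then 15/162 else 3/162

lemma hole_big {P : Measure E2} [IsProbabilityMeasure P] (hP : SelfSim P) {A K : Set E2} (hA : A.Finite) (hAn : A.Nonempty)
    (hKf : K.Finite) (hKn : K.Nonempty) (hF : ∀ a ∈ A, a ∉ K → ∀ y ∈ Tri, (147/200)^2 ≤ ‖y - a‖^2)
    {h : Fin 3} {y : E2} (hy : y ∈ Tri) (hr : (147/200)^2 ≤ d2 A (Smap h y)) : vb K.ncard < ee P A := by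
  obtain ⟨p, q, hpq, he⟩ := ee_eq' hP A h
  have h1 := (hole_int hP hA hAn hy hr).2
  have h2 := integral_nonneg (μ := P) (f := fun x => d2 A (Smap p x)) (fun x => d2_nonneg _ _)
  have h3 := integral_nonneg (μ := P) (f := fun x => d2 A (Smap q x)) (fun x => d2_nonneg _ _)
  have cp : Continuous fun x => d2 A (Smap p x) := (d2_cont A).comp (Smap_cont p)
  have cq : Continuous fun x => d2 A (Smap q x) := (d2_cont A).comp (Smap_cont q)
  have cpl : ∀ l, Continuous fun x => d2 A (Smap p (Smap l x)) := fun l => cp.comp (Smap_cont l)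
  have cql : ∀ l, Continuous fun x => d2 A (Smap q (Smap l x)) := fun l => cq.comp (Smap_cont l)
  have six : ∀ m : ℝ, (∀ x ∈ Tri, m ≤ (d2 A (Smap p (Smap 0 x)) + d2 A (Smap q (Smap 0 x))) +
      (d2 A (Smap p (Smap 1 x)) + d2 A (Smap q (Smap 1 x)))
      + (d2 A (Smap p (Smap 2 x)) + d2 A (Smap q (Smap 2 x)))) →
      m / 3 ≤ ∫ x, d2 A (Smap p x) ∂P + ∫ x, d2 A (Smap q x) ∂P := by
    intro m hm
    have h5 : Continuous fun x => d2 A (Smap p x) + d2 A (Smap q x) := cp.add cq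
    rw [← integral_add (hP.integrable cp) (hP.integrable cq), hP.integral h5]
    have c5 : ∀ l, Continuous fun x => d2 A (Smap p (Smap l x)) + d2 A (Smap q (Smap l x)) := fun l => (cpl l).add (cql l)
    have c01 : Continuous fun x => (d2 A (Smap p (Smap 0 x)) + d2 A (Smap q (Smap 0 x))) +
      (d2 A (Smap p (Smap 1 x)) + d2 A (Smap q (Smap 1 x))) := (c5 0).add (c5 1)
    have c012 : Continuous fun x => (d2 A (Smap p (Smap 0 x)) + d2 A (Smap q (Smap 0 x))) +
      (d2 A (Smap p (Smap 1 x)) + d2 A (Smap q (Smap 1 x)))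
      + (d2 A (Smap p (Smap 2 x)) + d2 A (Smap q (Smap 2 x))) := c01.add (c5 2)
    have h6 := hP.const_le m c012 hm
    rw [integral_add (hP.integrable c01) (hP.integrable (c5 2)), integral_add (hP.integrable (c5 0)) (hP.integrable (c5 1))] at h6
    linarith
  have hk := (Set.ncard_pos hKf).2 hKn
  unfold vb
  split_ifs with h1' h2'
  · obtain ⟨b, hb⟩ := Set.ncard_eq_one.1 (show K.ncard = 1 by omega)
    have := six (62/81) (fun x hx => six_one hA hAn (b := b) (by rw [hb]; simp) hpq hx hF)
    rw [he]; linarith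
  · have := six (8/81) (fun x hx => six_two hA hAn hKf (by omega) hpq hx hF)
    rw [he]; linarith
  · rw [he]; linarith


/-- the inverse of `Smap i` -/
def Sinv (i : Fin 3) (y : E2) : E2 := (3:ℝ) • y - (2:ℝ) • v i

lemma Smap_Sinv (i : Fin 3) (y : E2) : Smap i (Sinv i y) = y := by
  rw [Smap_eq, Sinv]; module

lemma Sinv_Smap (i : Fin 3) (x : E2) : Sinv i (Smap i x) = x := by
  rw [Smap_eq, Sinv]; module

lemma Smap_inj (i : Fin 3) : Function.Injective (Smap i) := Function.LeftInverse.injective (Sinv_Smap i)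

lemma Smap_surj (i : Fin 3) : Function.Surjective (Smap i) := Function.RightInverse.surjective (Smap_Sinv i)

lemma norm_Smap (i : Fin 3) (x b : E2) : ‖Smap i x - Smap i b‖^2 = (1/9) * ‖x - b‖^2 := by
  rw [Smap_sub_Smap, norm_smul, mul_pow, Real.norm_of_nonneg (by norm_num)]; norm_num

lemma SelfSim.moment_S' {P : Measure E2} [IsProbabilityMeasure P] (hP : SelfSim P) (i : Fin 3) (b : E2) :
    ∫ x, ‖Smap i x - b‖^2 ∂P = 1/54 + ‖Smap i c - b‖^2 := by
  have := hP.moment_S i (Sinv i b)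
  rw [Smap_Sinv] at this
  rw [this, ← Smap_Sinv i b, norm_Smap, Smap_Sinv]; ring

lemma ee_le {P : Measure E2} [IsProbabilityMeasure P] (hP : SelfSim P) {β : Set E2} (f : Fin 3 → E2) (hf : ∀ i, f i ∈ β) :
    ee P β ≤ 1/54 + (1/3) * (‖Smap 0 c - f 0‖^2 + ‖Smap 1 c - f 1‖^2 + ‖Smap 2 c - f 2‖^2) := by
  have h : ∀ i, ∫ x, d2 β (Smap i x) ∂P ≤ 1/54 + ‖Smap i c - f i‖^2 := by
    intro i
    rw [← hP.moment_S']
    apply hP.mono ((d2_cont β).comp (Smap_cont i)) (((Smap_cont i).sub continuous_const).norm.pow 2)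
    intro x _
    exact d2_le (hf i) _
  have h1 := hP.integral (d2_cont β)
  have := h 0; have := h 1; have := h 2
  rw [ee, h1]; linarith

lemma Vup {P : Measure E2} [IsProbabilityMeasure P] (hP : SelfSim P) {k : ℕ} (hk : 1 ≤ k) :
    ∃ β : Set E2, β.Finite ∧ β.Nonempty ∧ β.ncard ≤ k ∧ ee P β ≤ vb k := by
  unfold vb
  split_ifs with h1 h2
  · refine ⟨{c}, Set.finite_singleton _, Set.singleton_nonempty _, by rw [Set.ncard_singleton]; omega, ?_⟩
    have h2 : ee P {c} = ∫ x, ‖x - c‖^2 ∂P := by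
      unfold ee d2; simp [Metric.infDist_singleton, dist_eq_norm]
    rw [h2, hP.moment]; norm_num
  · refine ⟨{Smap 0 c, (2⁻¹:ℝ) • (Smap 1 c + Smap 2 c)}, by simp, by simp, (Set.ncard_insert_le _ _).trans (by simp [h2]), ?_⟩
    refine (ee_le hP ![Smap 0 c, (2⁻¹:ℝ) • (Smap 1 c + Smap 2 c), (2⁻¹:ℝ) • (Smap 1 c + Smap 2 c)] ?_).trans ?_
    · intro i; fin_cases i <;> simp
    · have := pair_eq (Smap 1 c) (Smap 2 c) ((2⁻¹:ℝ) • (Smap 1 c + Smap 2 c))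
      rw [Smap_diff_norm (by decide), sub_self, norm_zero] at this
      simp only [smul_add] at this ⊢
      simp
      linarith
  · refine ⟨Set.range fun i => Smap i c, Set.finite_range _, Set.range_nonempty _, ?_, ?_⟩
    · rw [← Set.image_univ]
      refine (Set.ncard_image_le Set.finite_univ).trans ?_
      rw [Set.ncard_univ]; simp; omega
    · refine (ee_le hP (fun i => Smap i c) (Set.mem_range_self)).trans ?_
      simp; norm_num

lemma iInf_eq {A : Set E2} (hA : A.Finite) (hAn : A.Nonempty) (x : E2) :
    ⨅ a ∈ A, ENNReal.ofReal (‖x - a‖ ^ 2) = ENNReal.ofReal (d2 A x) := by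
  apply le_antisymm
  · obtain ⟨a, ha, h⟩ := d2_serve hA hAn x
    rw [h]
    exact iInf₂_le a ha
  · exact le_iInf₂ fun a ha => ENNReal.ofReal_le_ofReal (d2_le ha x)

lemma err_eq {P : Measure E2} [IsProbabilityMeasure P] (hP : SelfSim P) {A : Set E2} (hA : A.Finite) (hAn : A.Nonempty) :
    err P A = ENNReal.ofReal (ee P A) := by
  unfold err ee
  simp_rw [iInf_eq hA hAn]
  rw [ofReal_integral_eq_lintegral_ofReal (hP.integrable (d2_cont A)) (Filter.Eventually.of_forall (d2_nonneg A))]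

lemma err_empty (P : Measure E2) [IsProbabilityMeasure P] : err P ∅ = ⊤ := by
  simp [err]

/-- real-valued formulation of optimality -/
def OptR (P : Measure E2) (n : ℕ) (α : Set E2) : Prop :=
  α.Finite ∧ α.Nonempty ∧ α.ncard ≤ n ∧ ∀ B : Set E2, B.Finite → B.Nonempty → B.ncard ≤ n → ee P α ≤ ee P B

lemma OptR.of {P : Measure E2} [IsProbabilityMeasure P] (hP : SelfSim P) {n : ℕ} (hn : 1 ≤ n) {α : Set E2}
    (h : IsOptimal P n α) : OptR P n α := by
  obtain ⟨hf, hc, he⟩ := h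
  have hle : ∀ B : Set E2, B.Finite → B.ncard ≤ n → err P α ≤ err P B := by
    intro B hB hBn
    rw [he]; exact iInf₂_le B ⟨hB, hBn⟩
  have hne : α.Nonempty := by
    by_contra h
    rw [Set.not_nonempty_iff_eq_empty] at h
    have := hle {c} (Set.finite_singleton _) (by simpa using hn)
    rw [h, err_empty, err_eq hP (Set.finite_singleton _) (Set.singleton_nonempty _), top_le_iff] at this
    exact ENNReal.ofReal_ne_top this
  refine ⟨hf, hne, hc, fun B hB hBn hBc => ?_⟩
  have := hle B hB hBc
  rwa [err_eq hP hf hne, err_eq hP hB hBn, ENNReal.ofReal_le_ofReal_iff (ee_nonneg _ _)] at this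

lemma OptR.to {P : Measure E2} [IsProbabilityMeasure P] (hP : SelfSim P) {n : ℕ} {α : Set E2}
    (h : OptR P n α) : IsOptimal P n α := by
  obtain ⟨hf, hne, hc, hle⟩ := h
  refine ⟨hf, hc, le_antisymm ?_ (iInf₂_le α ⟨hf, hc⟩)⟩
  refine le_iInf₂ fun B hB => ?_
  rcases B.eq_empty_or_nonempty with hB' | hB'
  · rw [hB', err_empty]; exact le_top
  · rw [err_eq hP hf hne, err_eq hP hB.1 hB']
    exact ENNReal.ofReal_le_ofReal (hle B hB.1 hB' hB.2)

lemma pre_eq (i : Fin 3) (A : Set E2) : Smap i ⁻¹' A = Sinv i '' A :=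
  (congrFun (Set.image_eq_preimage_of_inverse (Smap_Sinv i) (Sinv_Smap i)) A).symm

lemma pre_finite {A : Set E2} (hA : A.Finite) (i : Fin 3) : (Smap i ⁻¹' A).Finite := by
  rw [pre_eq]; exact hA.image _

lemma pre_nonempty {A : Set E2} (hA : A.Nonempty) (i : Fin 3) : (Smap i ⁻¹' A).Nonempty := by
  rw [pre_eq]; exact hA.image _

lemma pre_ncard (A : Set E2) (i : Fin 3) : (Smap i ⁻¹' A).ncard = A.ncard := by
  rw [pre_eq]; exact Set.ncard_image_of_injective _ (Function.LeftInverse.injective (Smap_Sinv i))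

lemma d2_Smap {A : Set E2} (hA : A.Finite) (hAn : A.Nonempty) (i : Fin 3) (x : E2) :
    d2 A (Smap i x) = (1/9) * d2 (Smap i ⁻¹' A) x := by
  apply le_antisymm
  · obtain ⟨a, ha, h⟩ := d2_serve (pre_finite hA i) (pre_nonempty hAn i) x
    rw [h, ← norm_Smap i]
    exact d2_le (A := A) (a := Smap i a) ha _
  · obtain ⟨a, ha, h⟩ := d2_serve hA hAn (Smap i x)
    rw [← Smap_Sinv i a] at h
    rw [h, norm_Smap i]
    have : Sinv i a ∈ Smap i ⁻¹' A := by rw [Set.mem_preimage, Smap_Sinv]; exact ha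
    linarith [d2_le this x]

lemma ee_scale {P : Measure E2} [IsProbabilityMeasure P] (hP : SelfSim P) {A : Set E2} (hA : A.Finite) (hAn : A.Nonempty) :
    ee P A = (1/27) * ∑ i, ee P (Smap i ⁻¹' A) := by
  rw [ee, hP.integral (d2_cont A)]
  simp only [d2_Smap hA hAn, integral_const_mul, Fin.sum_univ_three, ee]
  ring

lemma d2_anti {A B : Set E2} (hA : A.Finite) (hAn : A.Nonempty) (h : A ⊆ B) (x : E2) : d2 B x ≤ d2 A x := by
  obtain ⟨a, ha, h'⟩ := d2_serve hA hAn x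
  rw [h']; exact d2_le (h ha) x

lemma ee_anti {P : Measure E2} [IsProbabilityMeasure P] (hP : SelfSim P) {A B : Set E2} (hA : A.Finite) (hAn : A.Nonempty)
    (h : A ⊆ B) : ee P B ≤ ee P A :=
  hP.mono (d2_cont B) (d2_cont A) (fun x _ => d2_anti hA hAn h x)

lemma OptR.sum_le {P : Measure E2} [IsProbabilityMeasure P] (hP : SelfSim P) {n : ℕ} {α : Set E2} (h : OptR P n α)
    (β : Fin 3 → Set E2) (hf : ∀ i, (β i).Finite) (hne : ∀ i, (β i).Nonempty) (hc : ∑ i, (β i).ncard ≤ n) :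
    ∑ i, ee P (Smap i ⁻¹' α) ≤ ∑ i, ee P (β i) := by
  obtain ⟨haf, han, -, hle⟩ := h
  let B : Set E2 := ⋃ i, Smap i '' β i
  have hBf : B.Finite := Set.finite_iUnion fun i => (hf i).image _
  have hBn : B.Nonempty := by
    obtain ⟨x, hx⟩ := hne 0
    exact ⟨Smap 0 x, Set.mem_iUnion.2 ⟨0, x, hx, rfl⟩⟩
  have hBc : B.ncard ≤ n := by
    refine le_trans ?_ hc
    have h1 : B = (Smap 0 '' β 0 ∪ Smap 1 '' β 1) ∪ Smap 2 '' β 2 := by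
      ext x; simp only [B, Set.mem_iUnion, Fin.exists_fin_succ, Set.mem_union]
      simp [or_assoc]
    rw [h1, Fin.sum_univ_three]
    refine (Set.ncard_union_le _ _).trans (add_le_add ((Set.ncard_union_le _ _).trans (add_le_add ?_ ?_)) ?_) <;>
      exact Set.ncard_image_le (hf _)
  have h2 := hle B hBf hBn hBc
  rw [ee_scale hP haf han, ee_scale hP hBf hBn] at h2
  have h3 : ∑ i, ee P (Smap i ⁻¹' B) ≤ ∑ i, ee P (β i) := by
    apply Finset.sum_le_sum
    intro i _
    apply ee_anti hP (hf i) (hne i)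
    intro x hx
    exact Set.mem_iUnion.2 ⟨i, x, hx, rfl⟩
  linarith


lemma SelfSim.ae_eq {P : Measure E2} [IsProbabilityMeasure P] (hP : SelfSim P) {f g : E2 → ℝ} (hf : Continuous f)
    (hg : Continuous g) (h : ∀ x ∈ Tri, f x ≤ g x) (hi : ∫ x, g x ∂P ≤ ∫ x, f x ∂P) : ∀ᵐ x ∂P, f x = g x := by
  have hle : f ≤ᵐ[P] g := by filter_upwards [hP.ae_mem] with x hx using h x hx
  exact (integral_eq_iff_of_ae_le (hP.integrable hf) (hP.integrable hg) hle).1 (le_antisymm (hP.mono hf hg h) hi)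

lemma SelfSim.ae_pre {P : Measure E2} [IsProbabilityMeasure P] (hP : SelfSim P) {B : Set E2} (hB : MeasurableSet B)
    (h : ∀ᵐ x ∂P, x ∈ B) (i : Fin 3) : ∀ᵐ x ∂P, Smap i x ∈ B := by
  have h1 : P Bᶜ = 0 := h
  rw [hP.apply hB.compl, mul_eq_zero] at h1
  rcases h1 with h1 | h1
  · simp at h1
  · simp only [add_eq_zero] at h1
    change P (Smap i ⁻¹' Bᶜ) = 0
    fin_cases i
    · exact h1.1.1
    · exact h1.1.2
    · exact h1.2

lemma no_fin_inv {B : Set E2} (hB : B.Finite) (hBn : B.Nonempty) (h0 : ∀ x ∈ B, Smap 0 x ∈ B) (h1 : ∀ x ∈ B, Smap 1 x ∈ B) :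
    False := by
  have v0 : ∀ x, Smap 0 x = (3:ℝ)⁻¹ • x := fun x => rfl
  have hex : (B \ {0}).Nonempty := by
    obtain ⟨x, hx⟩ := hBn
    by_contra hne
    rw [Set.not_nonempty_iff_eq_empty, Set.sdiff_eq_empty] at hne
    have e0 := hne (h0 x hx)
    have e1 := hne (h1 x hx)
    have := Smap_diff_norm (i := 0) (j := 1) (by decide) x
    rw [e0, e1] at this
    norm_num at this
  obtain ⟨x, hx, hmin⟩ := Set.exists_min_image (B \ {0}) (fun x => ‖x‖) (hB.subset Set.sdiff_subset) hex
  have hx0 : x ≠ 0 := hx.2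
  have h2 := hmin (Smap 0 x) ⟨h0 x hx.1, by rw [v0]; simpa using hx0⟩
  simp only [v0, norm_smul] at h2
  rw [Real.norm_of_nonneg (by norm_num)] at h2
  have := norm_pos_iff.2 hx0
  linarith

lemma no_fin {P : Measure E2} [IsProbabilityMeasure P] (hP : SelfSim P) (k : ℕ) :
    ∀ B : Set E2, B.Finite → B.ncard = k → (∀ᵐ x ∂P, x ∈ B) → False := by
  induction k using Nat.strong_induction_on with
  | _ k ih =>
    intro B hB hk hae
    by_cases hinv : ∀ i, ∀ x ∈ B, Smap i x ∈ B
    · exact no_fin_inv hB hae.exists (hinv 0) (hinv 1)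
    · push Not at hinv
      obtain ⟨i, x, hx, hxi⟩ := hinv
      have hss : B ∩ Smap i ⁻¹' B ⊂ B := by
        refine ⟨Set.inter_subset_left, fun h => hxi (h hx).2⟩
      refine ih _ (hk ▸ Set.ncard_lt_ncard hss hB) (B ∩ Smap i ⁻¹' B) (hB.subset Set.inter_subset_left) rfl ?_
      filter_upwards [hae, hP.ae_pre hB.measurableSet hae i] with y h1 h2 using ⟨h1, h2⟩

lemma strict {P : Measure E2} [IsProbabilityMeasure P] (hP : SelfSim P) {B : Set E2} (hB : B.Finite) (hBn : B.Nonempty) :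
    ∃ x, ee P (insert x B) < ee P B := by
  by_contra hcon
  push Not at hcon
  have h1 : ∀ n, ∀ᵐ x ∂P, d2 B x ≤ ‖x - TopologicalSpace.denseSeq E2 n‖^2 := by
    intro n
    filter_upwards [hP.ae_eq (d2_cont _) (d2_cont B) (fun x _ => d2_anti hB hBn (Set.subset_insert _ B) x)
      (hcon (TopologicalSpace.denseSeq E2 n))] with x hx
    rw [← hx]
    exact d2_le (Set.mem_insert _ _) x
  refine no_fin hP _ B hB rfl ?_
  filter_upwards [ae_all_iff.2 h1] with x hx
  have h2 : d2 B x ≤ 0 := by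
    have hd := TopologicalSpace.denseRange_denseSeq E2
    have h3 : ∀ y : E2, d2 B x ≤ ‖x - y‖^2 := by
      intro y
      have hcl : IsClosed {y : E2 | d2 B x ≤ ‖x - y‖^2} := isClosed_le continuous_const (by fun_prop)
      exact hd.induction_on y hcl hx
    simpa using h3 x
  obtain ⟨a, ha, h'⟩ := d2_serve hB hBn x
  have : ‖x - a‖ = 0 := by nlinarith [norm_nonneg (x - a)]
  rw [norm_eq_zero, sub_eq_zero] at this
  rwa [this]

lemma proj_Tri {b : E2} (hb : b ∉ Tri) : ∃ b', ∀ x ∈ Tri, ‖x - b'‖ < ‖x - b‖ := by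
  obtain ⟨b', hb', h⟩ := exists_norm_eq_iInf_of_complete_convex Tri_nonempty Tri_compact.isComplete Tri_convex b
  rw [norm_eq_iInf_iff_real_inner_le_zero Tri_convex hb'] at h
  refine ⟨b', fun x hx => ?_⟩
  have h1 := h x hx
  have h2 : x - b = (x - b') - (b - b') := by abel
  have h3 := norm_sub_sq_real (x - b') (b - b')
  rw [← h2, real_inner_comm] at h3
  have h4 : 0 < ‖b - b'‖ := by
    rw [norm_pos_iff, sub_ne_zero]
    rintro rfl; exact hb hb'
  nlinarith [norm_nonneg (x - b), norm_nonneg (x - b')]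

lemma OptR.sub_Tri {P : Measure E2} [IsProbabilityMeasure P] (hP : SelfSim P) {β : Set E2} (h : OptR P β.ncard β) : β ⊆ Tri := by
  obtain ⟨hf, hne, -, hle⟩ := h
  intro b hb
  by_contra hbT
  obtain ⟨b', hb'⟩ := proj_Tri hbT
  have hf0 : (β \ {b}).Finite := hf.subset Set.sdiff_subset
  have hc0 := Set.ncard_sdiff_singleton_add_one hb hf
  have hc : ∀ x, (insert x (β \ {b})).ncard ≤ β.ncard := fun x => hc0 ▸ Set.ncard_insert_le _ _
  have h1 := hle _ (hf0.insert b') (Set.insert_nonempty _ _) (hc b')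
  have hd : ∀ x ∈ Tri, d2 (insert b' (β \ {b})) x ≤ d2 β x := by
    intro x hx
    obtain ⟨a, ha, h'⟩ := d2_serve hf hne x
    rw [h']
    by_cases hab : a = b
    · subst hab
      exact (d2_le (Set.mem_insert _ _) x).trans (pow_le_pow_left₀ (norm_nonneg _) (hb' x hx).le 2)
    · exact d2_le (Set.mem_insert_of_mem _ (show a ∈ β \ {b} from ⟨ha, hab⟩)) x
  have h2 := hP.ae_eq (d2_cont _) (d2_cont β) hd h1
  have h3 : ∀ᵐ x ∂P, ∃ a ∈ β \ {b}, d2 β x = ‖x - a‖^2 := by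
    filter_upwards [h2, hP.ae_mem] with x hx hxT
    obtain ⟨a, ha, h'⟩ := d2_serve hf hne x
    by_cases hab : a = b
    · subst hab
      have h5 := d2_le (Set.mem_insert b' (β \ {a})) x
      have h6 := hb' x hxT
      nlinarith [norm_nonneg (x - b')]
    · exact ⟨a, ⟨ha, hab⟩, h'⟩
  have hne0 : (β \ {b}).Nonempty := by
    obtain ⟨x, a, ha, -⟩ := h3.exists
    exact ⟨a, ha⟩
  have h4 : ee P (β \ {b}) ≤ ee P β := by
    apply integral_mono_ae (hP.integrable (d2_cont _)) (hP.integrable (d2_cont _))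
    filter_upwards [h3] with x ⟨a, ha, hx⟩
    rw [hx]; exact d2_le ha x
  obtain ⟨x, hx⟩ := strict hP hf0 hne0
  have := hle _ (hf0.insert x) (Set.insert_nonempty _ _) (hc x)
  linarith


lemma u_swap (i j : Fin 3) : u j i = - u i j := by simp [u]

lemma foreign_half {i j : Fin 3} (hij : i ≠ j) {b : E2} (h : ‖Smap i b - Smap j c‖ ≤ ‖Smap i b - Smap i c‖) :
    Foreign i (1/2) b := by
  refine ⟨j, hij, ?_⟩
  have h1 : Smap i b - Smap j c = (3:ℝ)⁻¹ • ((b - c) - (2:ℝ) • u i j) := by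
    rw [← sub_sub_sub_cancel_right _ _ (Smap i c), Smap_sub_Smap, Smap_diff]; module
  rw [h1, Smap_sub_Smap, norm_smul, norm_smul] at h
  have h2 : ‖(b - c) - (2:ℝ) • u i j‖ ≤ ‖b - c‖ := by
    refine le_of_mul_le_mul_left h ?_
    norm_num
  have h3 := norm_sub_sq_real (b - c) ((2:ℝ) • u i j)
  rw [norm_smul, norm_u' hij, real_inner_smul_right, Real.norm_of_nonneg (by norm_num)] at h3
  have h4 := pow_le_pow_left₀ (norm_nonneg _) h2 2
  linarith

lemma frame_change {i j : Fin 3} (hij : i ≠ j) {b b' : E2} (h : Smap i b = Smap j b') :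
    inner ℝ (b' - c) (u j i) = 2 - inner ℝ (b - c) (u i j) := by
  have h1 : b' - c = (b - c) - (2:ℝ) • u i j := by
    have h2 : Smap i b - c = Smap j b' - c := by rw [h]
    rw [Smap_sub_c, Smap_sub_c] at h2
    have h3 : (3:ℝ) • ((3:ℝ)⁻¹ • (b - c) + (2/3:ℝ) • e i) = (3:ℝ) • ((3:ℝ)⁻¹ • (b' - c) + (2/3:ℝ) • e j) := by rw [h2]
    have h4 : (b' - c) = (3:ℝ) • ((3:ℝ)⁻¹ • (b' - c) + (2/3:ℝ) • e j) - (2:ℝ) • e j := by module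
    rw [h4, ← h3, u]; module
  rw [h1, u_swap i j, inner_neg_right, inner_sub_left, real_inner_smul_left, real_inner_self_eq_norm_sq, norm_u hij]
  ring

lemma own_exists : ∃ own : E2 → Fin 3, ∀ a j, ‖a - Smap (own a) c‖ ≤ ‖a - Smap j c‖ := by
  have : ∀ a : E2, ∃ i, ∀ j, ‖a - Smap i c‖ ≤ ‖a - Smap j c‖ := fun a => Finite.exists_min _
  choose own h using this
  exact ⟨own, h⟩

lemma fiber_sum {α : Set E2} (hα : α.Finite) (own : E2 → Fin 3) : ∑ i, {a | a ∈ α ∧ own a = i}.ncard = α.ncard := by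
  classical
  rw [Set.ncard_eq_toFinset_card α hα, Finset.card_eq_sum_card_fiberwise (f := own) (t := Finset.univ) (by simp)]
  apply Finset.sum_congr rfl
  intro i _
  rw [← Set.ncard_coe_finset]
  congr 1
  ext a; simp

lemma dich {P : Measure E2} [IsProbabilityMeasure P] (hP : SelfSim P) {A K : Set E2} (hA : A.Finite)
    (hKn : K.Nonempty) (hKA : K ⊆ A) {D : ℝ} (hF : ∀ a ∈ A, a ∉ K → ∀ y ∈ Tri, D^2 ≤ ‖y - a‖^2) :
    (∃ h, ∃ y ∈ Tri, D^2 ≤ d2 A (Smap h y)) ∨ ee P A = ee P K := by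
  by_cases hh : ∃ h, ∃ y ∈ Tri, D^2 ≤ d2 A (Smap h y)
  · exact Or.inl hh
  · right
    push Not at hh
    have hKf : K.Finite := hA.subset hKA
    apply le_antisymm (ee_anti hP hKf hKn hKA)
    rw [ee_eq hP, ee_eq hP]
    have key : ∀ x ∈ Tri, ∀ h, d2 K (Smap h x) ≤ d2 A (Smap h x) := by
      intro x hx h
      obtain ⟨a, ha, h'⟩ := d2_serve hA (hKn.mono hKA) (Smap h x)
      have h1 := hh h x hx
      rw [h'] at h1 ⊢
      by_cases hak : a ∈ K
      · exact d2_le hak _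
      · exact absurd (hF a ha hak _ (Smap_mem h hx)) (not_le.2 h1)
    have := hP.mono (sum_cont K) (sum_cont A) (fun x hx => add_le_add (add_le_add (key x hx 0) (key x hx 1)) (key x hx 2))
    linarith

lemma OptR.sum_vb {P : Measure E2} [IsProbabilityMeasure P] (hP : SelfSim P) {n : ℕ} {α : Set E2} (h : OptR P n α)
    (k : Fin 3 → ℕ) (hk : ∀ i, 1 ≤ k i) (hc : ∑ i, k i ≤ n) : ∑ i, ee P (Smap i ⁻¹' α) ≤ ∑ i, vb (k i) := by
  have := fun i => Vup hP (hk i)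
  choose β hf hne hcard hee using this
  exact (h.sum_le hP β hf hne ((Finset.sum_le_sum fun i _ => hcard i).trans hc)).trans (Finset.sum_le_sum fun i _ => hee i)

lemma vb_small {k : ℕ} (h1 : 1 ≤ k) (h3 : k ≤ 3) : 162 * vb k = 12 * (3 - k : ℝ) + 3 := by
  interval_cases k <;> norm_num [vb]

lemma vb_large {k : ℕ} (h3 : 3 ≤ k) : 162 * vb k = 3 := by
  rw [vb, if_neg (by omega), if_neg (by omega)]; norm_num

/-- loss bound -/
lemma vb_loss {P : Measure E2} {A : Set E2} {k : ℕ} (h1 : 1 ≤ k) (hl : 12 * (3 - k : ℝ) ≤ 162 * ee P A) :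
    162 * vb k ≤ 162 * ee P A + 3 := by
  rcases le_total k 3 with h | h
  · rw [vb_small h1 h]; linarith
  · rw [vb_large h]; linarith [ee_nonneg P A]

lemma third' {i j : Fin 3} (h : i ≠ j) : ∃ l, l ≠ i ∧ l ≠ j ∧ (∀ f : Fin 3 → ℝ, ∑ m, f m = f i + f j + f l) ∧
    ∀ f : Fin 3 → ℕ, ∑ m, f m = f i + f j + f l := by
  obtain ⟨l, hl⟩ : ∃ l, l ≠ i ∧ l ≠ j := by revert i j; decide
  refine ⟨l, hl.1, hl.2, ?_, ?_⟩ <;> intro f <;> rw [Fin.sum_univ_three] <;> revert hl <;> revert h <;>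
    fin_cases i <;> fin_cases j <;> fin_cases l <;> simp <;> ring

/-- The key structural result: local decoupling. -/
lemma main {P : Measure E2} [IsProbabilityMeasure P] (hP : SelfSim P) {n : ℕ} (hn : 3 ≤ n) {α : Set E2} (hO : OptR P n α)
    {own : E2 → Fin 3} (hown : ∀ a j, ‖a - Smap (own a) c‖ ≤ ‖a - Smap j c‖) (K : Fin 3 → Set E2)
    (hK : ∀ i, K i = Smap i ⁻¹' {a | a ∈ α ∧ own a = i}) :
    (∀ i, (K i).Finite ∧ (K i).Nonempty) ∧ (∑ i, (K i).ncard ≤ n) ∧ ∀ i, ee P (Smap i ⁻¹' α) = ee P (K i) := by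
  classical
  have haf := hO.1
  have han := hO.2.1
  have hAf := pre_finite haf
  have hAn := pre_nonempty han
  have hKA : ∀ i, K i ⊆ Smap i ⁻¹' α := by
    intro i b hb; rw [hK] at hb; exact hb.1
  have hKf : ∀ i, (K i).Finite := fun i => (hAf i).subset (hKA i)
  have hsum : ∑ i, (K i).ncard ≤ n := by
    refine le_trans (le_of_eq ?_) hO.2.2.1
    rw [← fiber_sum haf own]
    refine Finset.sum_congr rfl fun i _ => ?_
    rw [hK, pre_ncard]
  have hmem : ∀ i b, b ∈ Smap i ⁻¹' α → b ∉ K i → own (Smap i b) ≠ i := by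
    intro i b hb hbK ho
    apply hbK; rw [hK]; exact ⟨hb, ho⟩
  have hfor : ∀ i, ∀ b ∈ Smap i ⁻¹' α, b ∉ K i → Foreign i (1/2) b := by
    intro i b hb hbK
    exact foreign_half (hmem i b hb hbK).symm (hown _ _)
  have hKn : ∀ i, (K i).Nonempty := by
    intro i
    by_contra hne
    rw [Set.not_nonempty_iff_eq_empty] at hne
    have h1 := lower_F0 hP (hAf i) (hAn i) i (fun b hb => hfor i b hb (by rw [hne]; simp))
    have h2 := hO.sum_vb hP (fun _ => 1) (fun _ => le_rfl) (by simpa using hn)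
    have h3 := Finset.single_le_sum (f := fun i => ee P (Smap i ⁻¹' α)) (fun j _ => ee_nonneg P _) (Finset.mem_univ i)
    simp [vb] at h2 h3
    linarith
  have hk1 : ∀ i, 1 ≤ (K i).ncard := fun i => (Set.ncard_pos (hKf i)).2 (hKn i)
  have hlow : ∀ i, 12 * (3 - (K i).ncard : ℝ) ≤ 162 * ee P (Smap i ⁻¹' α) := fun i =>
    lower_F hP (hAf i) (hAn i) (hKf i) i (hfor i)
  have claim : ∀ i, ee P (Smap i ⁻¹' α) = ee P (K i) ∨ vb (K i).ncard < ee P (Smap i ⁻¹' α) := by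
    by_cases hcase : ∀ i, 3 ≤ (K i).ncard
    · intro i
      rcases dich hP (hAf i) (hKn i) (hKA i) (D := 1/2) (fun a ha hak y hy => (hfor i a ha hak).dist_sq (by norm_num) hy) with
        ⟨h, y, hy, hr⟩ | h
      · right
        have h1 := hole_half hP (hAf i) (hAn i) hy (hr.trans' (by norm_num))
        have h2 := vb_large (hcase i)
        linarith
      · exact Or.inl h
    · push Not at hcase
      obtain ⟨p, hp⟩ := hcase
      have hall : ∀ q, (K q).ncard ≤ 3 := by
        intro q
        by_contra hq
        push Not at hq
        have hpq : p ≠ q := by rintro rfl; omega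
        obtain ⟨l, hlp, hlq, hsr, hsn⟩ := third' hpq
        let k : Fin 3 → ℕ := fun m => if m = p then (K p).ncard + 1 else if m = q then (K q).ncard - 1 else (K m).ncard
        have kp : k p = (K p).ncard + 1 := by simp [k]
        have kq : k q = (K q).ncard - 1 := by simp [k, hpq.symm]
        have kl : k l = (K l).ncard := by simp [k, hlp, hlq]
        have hkk : ∀ m, 1 ≤ k m := by
          intro m
          have := hk1 m
          simp only [k]; split_ifs <;> omega
        have h1 := hO.sum_vb hP k hkk (by
          rw [hsn] at hsum ⊢
          rw [kp, kq, kl]; omega)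
        rw [hsr, hsr, kp, kq, kl] at h1
        have e1 := vb_small (k := (K p).ncard + 1) (by omega) (by omega)
        have e2 := vb_large (k := (K q).ncard - 1) (by omega)
        have e3 := vb_loss (hk1 l) (hlow l)
        have e4 := hlow p
        have e5 := ee_nonneg P (Smap q ⁻¹' α)
        push_cast at e1
        linarith
      have hlost : ∀ i, ∀ b ∈ K i, ¬ Foreign i (53/200) b := by
        intro i b hb hF
        have h1 := lower_lost hP (hAf i) (hAn i) (hKf i) i (hfor i) hb hF
        obtain ⟨j, hij⟩ : ∃ j, i ≠ j := ⟨i + 1, by fin_cases i <;> decide⟩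
        obtain ⟨l, hlp, hlq, hsr, hsn⟩ := third' hij
        have h2 := hO.sum_vb hP (fun i => (K i).ncard) hk1 hsum
        rw [hsr, hsr] at h2
        have := vb_small (hk1 i) (hall i)
        have := vb_small (hk1 j) (hall j)
        have := vb_small (hk1 l) (hall l)
        have := hlow j
        have := hlow l
        linarith
      have hfar : ∀ i, ∀ b ∈ Smap i ⁻¹' α, b ∉ K i → Foreign i (147/200) b := by
        intro i b hb hbK
        have hne := hmem i b hb hbK
        refine ⟨own (Smap i b), hne.symm, ?_⟩
        have hb' : Sinv (own (Smap i b)) (Smap i b) ∈ K (own (Smap i b)) := by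
          rw [hK]
          refine ⟨?_, ?_⟩ <;> rw [Smap_Sinv]
          exact hb
        have h1 := hlost _ _ hb'
        by_contra hcon
        push Not at hcon
        apply h1
        refine ⟨i, hne, ?_⟩
        rw [frame_change hne.symm (b := b) (by rw [Smap_Sinv])]
        linarith
      intro i
      have hF : ∀ a ∈ Smap i ⁻¹' α, a ∉ K i → ∀ y ∈ Tri, (147/200)^2 ≤ ‖y - a‖^2 :=
        fun a ha hak y hy => (hfar i a ha hak).dist_sq (by norm_num) hy
      rcases dich hP (hAf i) (hKn i) (hKA i) hF with ⟨h, y, hy, hr⟩ | h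
      · exact Or.inr (hole_big hP (hAf i) (hAn i) (hKf i) (hKn i) hF hy hr)
      · exact Or.inl h
  refine ⟨fun i => ⟨hKf i, hKn i⟩, hsum, ?_⟩
  by_contra hcon
  push Not at hcon
  obtain ⟨i, hi⟩ := hcon
  have := fun i => Vup hP (hk1 i)
  choose β hf hne hcard hee using this
  let γ : Fin 3 → Set E2 := fun j => if ee P (Smap j ⁻¹' α) = ee P (K j) then K j else β j
  have h1 := hO.sum_le hP γ (fun j => by simp only [γ]; split_ifs; exacts [hKf j, hf j])
    (fun j => by simp only [γ]; split_ifs; exacts [hKn j, hne j])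
    ((Finset.sum_le_sum fun j _ => show (γ j).ncard ≤ (K j).ncard by
      simp only [γ]; split_ifs; exacts [le_rfl, hcard j]).trans hsum)
  have hlt : ∑ j, ee P (γ j) < ∑ j, ee P (Smap j ⁻¹' α) := by
    apply Finset.sum_lt_sum
    · intro j _
      simp only [γ]
      split_ifs with hj
      · exact hj.ge
      · exact (hee j).trans ((claim j).resolve_left hj).le
    · refine ⟨i, Finset.mem_univ _, ?_⟩
      simp only [γ]
      rw [if_neg hi]
      exact (hee i).trans_lt ((claim i).resolve_left hi)
  linarith

theorem final (P : Measure E2) [IsProbabilityMeasure P] (hP : SelfSim P)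
    (n : ℕ) (hn : 3 ≤ n) (α : Set E2) (hα : IsOptimal P n α) :
    (∀ i : Fin 3,
        IsOptimal P ((α ∩ Smap i '' Tri).ncard) (Smap i ⁻¹' (α ∩ Smap i '' Tri)))
      ∧ quantErr P n
          = ∑ i : Fin 3, (27 : ℝ≥0∞)⁻¹ * quantErr P ((α ∩ Smap i '' Tri).ncard) := by
  have hO := OptR.of hP (by omega) hα
  obtain ⟨own, hown⟩ := own_exists
  obtain ⟨K, hK⟩ : ∃ K : Fin 3 → Set E2, ∀ i, K i = Smap i ⁻¹' {a | a ∈ α ∧ own a = i} := ⟨_, fun _ => rfl⟩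
  obtain ⟨hKfn, hsum, hee⟩ := main hP hn hO hown K hK
  have hopt : ∀ i, OptR P (K i).ncard (K i) := by
    intro i
    refine ⟨(hKfn i).1, (hKfn i).2, le_rfl, fun B hB hBn hBc => ?_⟩
    obtain ⟨j, hij⟩ : ∃ j, i ≠ j := ⟨i + 1, by fin_cases i <;> decide⟩
    obtain ⟨l, hli, hlj, hsr, hsn⟩ := third' hij
    have e1 : Function.update K i B i = B := by simp
    have e2 : Function.update K i B j = K j := by simp [hij.symm]
    have e3 : Function.update K i B l = K l := by simp [hli]
    have h1 := hO.sum_le hP (Function.update K i B)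
      (fun m => by by_cases hm : m = i
                   · subst hm; simpa using hB
                   · simpa [hm] using (hKfn m).1)
      (fun m => by by_cases hm : m = i
                   · subst hm; simpa using hBn
                   · simpa [hm] using (hKfn m).2)
      (by rw [hsn] at hsum ⊢; rw [e1, e2, e3]; omega)
    rw [hsr, hsr, e1, e2, e3, hee, hee, hee] at h1
    linarith
  have hset : ∀ i, α ∩ Smap i '' Tri = {a | a ∈ α ∧ own a = i} := by
    intro i
    ext a
    constructor
    · rintro ⟨ha, t, ht, rfl⟩
      refine ⟨ha, ?_⟩
      by_contra hne
      obtain ⟨j, hij, hj⟩ := foreign_half (Ne.symm hne) (hown (Smap i t) i)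
      linarith [(inner_u_le hij ht).1]
    · rintro ⟨ha, ho⟩
      refine ⟨ha, Sinv i a, (hopt i).sub_Tri hP ?_, Smap_Sinv i a⟩
      rw [hK, Set.mem_preimage, Smap_Sinv]
      exact ⟨ha, ho⟩
  have hpre : ∀ i, Smap i ⁻¹' (α ∩ Smap i '' Tri) = K i := fun i => by rw [hset, hK]
  have hcard : ∀ i, (α ∩ Smap i '' Tri).ncard = (K i).ncard := fun i => by rw [← hpre, pre_ncard]
  simp only [hpre, hcard]
  refine ⟨fun i => (hopt i).to hP, ?_⟩
  have hq : ∀ i, quantErr P (K i).ncard = ENNReal.ofReal (ee P (K i)) := by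
    intro i
    rw [← ((hopt i).to hP).2.2, err_eq hP (hKfn i).1 (hKfn i).2]
  simp only [hq]
  rw [← hα.2.2, err_eq hP hO.1 hO.2.1, ee_scale hP hO.1 hO.2.1, ← Finset.mul_sum,
    ← ENNReal.ofReal_sum_of_nonneg (fun i _ => ee_nonneg P _), ENNReal.ofReal_mul (by norm_num)]
  congr 1
  · rw [one_div, ENNReal.ofReal_inv_of_pos (by norm_num)]; norm_num
  · simp only [hee]


end RM

/-- If α is an optimal set of n-means (n ≥ 3) for the R-measure P and β_i = α ∩ △_i with
n_i = card β_i, then S_i⁻¹(β_i) is an optimal set of n_i-means for P, and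
V_n(P) = ∑_{i=1}^{3} (1/27)·V_{n_i}(P). -/
theorem stmt_9 (P : Measure E2) [IsProbabilityMeasure P]
    (hP : P = (3 : ℝ≥0∞)⁻¹ • (P.map S1 + P.map S2 + P.map S3))
    (n : ℕ) (hn : 3 ≤ n) (α : Set E2) (hα : IsOptimal P n α) :
    (∀ i : Fin 3,
        IsOptimal P ((α ∩ Smap i '' Tri).ncard) (Smap i ⁻¹' (α ∩ Smap i '' Tri)))
      ∧ quantErr P n
          = ∑ i : Fin 3, (27 : ℝ≥0∞)⁻¹ * quantErr P ((α ∩ Smap i '' Tri).ncard) := by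
  exact RM.final P (RM.RP_eq hP) n hn α hα

end
end

section
/- Let P be the R-measure, k ≥ 1, and ω ∈ {1,2,3}^k. If α is an optimal set of n-means for P, then S_ω(α) := {S_ω(a) : a ∈ α} is an optimal set of n-means for the image measure P∘S_ω⁻¹. Conversely, if β is an optimal set of n-means for P∘S_ω⁻¹, then S_ω⁻¹(β) := {S_ω⁻¹(a) : a ∈ β} is an optimal set of n-means for P. -/
open MeasureTheory ENNReal

noncomputable section

theorem aux_affine (l : List (E2 → E2))
    (h : ∀ g ∈ l, ∃ b : E2, ∀ x, g x = (3 : ℝ)⁻¹ • x + b) :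
    ∃ (r : ℝ) (b : E2), 0 < r ∧ ∀ x, l.foldr (fun g y => g y) x = r • x + b := by
  induction l with
  | nil => exact ⟨1, 0, one_pos, fun x => by simp⟩
  | cons g l ih =>
    obtain ⟨r, b, hr, hb⟩ := ih (fun g hg => h g (List.mem_cons_of_mem _ hg))
    obtain ⟨c, hc⟩ := h g List.mem_cons_self
    refine ⟨3⁻¹ * r, (3 : ℝ)⁻¹ • b + c, by positivity, fun x => ?_⟩
    rw [List.foldr_cons, hb, hc, smul_add, smul_smul, add_assoc]

theorem aux_Sword {k : ℕ} (ω : Fin k → Fin 3) :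
    ∃ (r : ℝ) (b : E2), 0 < r ∧ ∀ x, Sword ω x = r • x + b := by
  apply aux_affine
  intro g hg
  rw [List.mem_ofFn] at hg
  obtain ⟨i, rfl⟩ := hg
  generalize ω i = j
  fin_cases j
  · exact ⟨0, fun x => by simp [Smap, S1]⟩
  · exact ⟨pt (2/3) 0, fun x => by simp [Smap, S2]⟩
  · exact ⟨pt (1/3) (Real.sqrt 3 / 3), fun x => by simp [Smap, S3]⟩

theorem aux_err (P : Measure E2) (f : E2 → E2) (r : ℝ) (b : E2) (hr : 0 < r)
    (hf : ∀ x, f x = r • x + b) (α : Set E2) (hα : α.Finite) :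
    err (P.map f) (f '' α) = ENNReal.ofReal (r ^ 2) * err P α := by
  have hc : Continuous f := by
    have : f = fun x => r • x + b := funext hf
    rw [this]; fun_prop
  have hm : ∀ s : Set E2, s.Finite →
      Measurable (fun x : E2 => ⨅ a ∈ s, ENNReal.ofReal (‖x - a‖ ^ 2)) := by
    intro s hs
    exact Measurable.biInf s hs.countable (fun a _ => by fun_prop)
  unfold err
  rw [lintegral_map (hm _ (hα.image f)) hc.measurable, ← lintegral_const_mul _ (hm _ hα)]
  congr 1
  ext x
  have h0 : ENNReal.ofReal (r ^ 2) ≠ 0 := by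
    rw [Ne, ENNReal.ofReal_eq_zero]; have := pow_pos hr 2; linarith
  rw [iInf_image, ENNReal.mul_iInf_of_ne h0 ENNReal.ofReal_ne_top]
  refine iInf_congr fun a => ?_
  rw [ENNReal.mul_iInf_of_ne h0 ENNReal.ofReal_ne_top]
  refine iInf_congr fun _ => ?_
  rw [hf, hf, add_sub_add_right_eq_sub, ← smul_sub, norm_smul, mul_pow, Real.norm_eq_abs, sq_abs,
    ENNReal.ofReal_mul (sq_nonneg r)]

theorem isOptimal_iff_aux (μ : Measure E2) (n : ℕ) (α : Set E2) :
    IsOptimal μ n α ↔ α.Finite ∧ α.ncard ≤ n ∧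
      ∀ β : Set E2, β.Finite → β.ncard ≤ n → err μ α ≤ err μ β := by
  unfold IsOptimal quantErr
  refine and_congr_right fun h1 => and_congr_right fun h2 => ⟨fun h β hb hn => ?_, fun h => ?_⟩
  · rw [h]; exact iInf₂_le β ⟨hb, hn⟩
  · exact le_antisymm (le_iInf₂ fun β hb => h β hb.1 hb.2) (iInf₂_le α ⟨h1, h2⟩)

theorem aux_image (P : Measure E2) (f : E2 → E2) (r : ℝ) (b : E2) (hr : 0 < r)
    (hf : ∀ x, f x = r • x + b) (n : ℕ) (α : Set E2) :
    IsOptimal (P.map f) n (f '' α) ↔ IsOptimal P n α := by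
  have hi : Function.Injective f := by
    intro x y h
    rw [hf, hf] at h
    exact smul_right_injective E2 hr.ne' (add_right_cancel h)
  have hs : Function.Surjective f := fun y => ⟨r⁻¹ • (y - b), by
    rw [hf, smul_smul, mul_inv_cancel₀ hr.ne', one_smul, sub_add_cancel]⟩
  have h0 : ENNReal.ofReal (r ^ 2) ≠ 0 := by
    rw [Ne, ENNReal.ofReal_eq_zero]; have := pow_pos hr 2; linarith
  rw [isOptimal_iff_aux, isOptimal_iff_aux, Set.finite_image_iff hi.injOn,
    Set.ncard_image_of_injective _ hi]
  refine and_congr_right fun h1 => and_congr_right fun _ => ?_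
  rw [hs.image_surjective.forall]
  refine forall_congr' fun β => ?_
  rw [Set.finite_image_iff hi.injOn, Set.ncard_image_of_injective _ hi]
  refine forall_congr' fun h3 => forall_congr' fun _ => ?_
  rw [aux_err P f r b hr hf α h1, aux_err P f r b hr hf β h3,
    ENNReal.mul_le_mul_iff_right h0 ENNReal.ofReal_ne_top]

/-- For the R-measure P, k ≥ 1 and ω ∈ {1,2,3}^k: if α is an optimal set of n-means for P
then S_ω(α) is an optimal set of n-means for the image measure P∘S_ω⁻¹; conversely, if β is
an optimal set of n-means for P∘S_ω⁻¹ then S_ω⁻¹(β) is an optimal set of n-means for P. -/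
theorem stmt_10 (P : Measure E2) [IsProbabilityMeasure P]
    (hP : P = (3 : ℝ≥0∞)⁻¹ • (P.map S1 + P.map S2 + P.map S3))
    (k : ℕ) (hk : 1 ≤ k) (ω : Fin k → Fin 3) (n : ℕ) :
    (∀ α : Set E2, IsOptimal P n α → IsOptimal (P.map (Sword ω)) n (Sword ω '' α))
      ∧ (∀ β : Set E2, IsOptimal (P.map (Sword ω)) n β →
          IsOptimal P n (Sword ω ⁻¹' β)) := by
  obtain ⟨r, b, hr, hf⟩ := aux_Sword ω
  refine ⟨fun α h => (aux_image P _ r b hr hf n α).2 h, fun β h => ?_⟩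
  have hs : Function.Surjective (Sword ω) := fun y => ⟨r⁻¹ • (y - b), by
    rw [hf, smul_smul, mul_inv_cancel₀ hr.ne', one_smul, sub_add_cancel]⟩
  rw [← aux_image P _ r b hr hf n, Set.image_preimage_eq _ hs]
  exact h

end
end
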